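/- Fix t > 0, l ∈ ℕ, θ ∈ (0,1], M > 0. Let c : [0,t] × ℝˡ → ℝ^{l×l} be measurable with symmetric values satisfying θ|y|² ≤ yᵀc_s(x)y ≤ θ^{-1}|y|² for all s, x, y, with c_s(·) of class C¹ and the first partial derivatives of c_s bounded uniformly over s ∈ [0,t]. Let a : [0,t] × ℝˡ → ℝˡ be measurable with |a_s(x)| ≤ M(1 + |x|) for all s ∈ [0,t], x ∈ ℝˡ. Let m : [0,t] × ℝˡ → [0,∞) be measurable such that for a.e. s, m_s(·) is a probability density in W^{1,1}_loc(ℝˡ), and ∫₀ᵗ ∫_{ℝˡ} |Dm_s(x)|²/m_s(x) dx ds < ∞. Suppose that for some L > 0: ∫₀ᵗ sup_h ∫_{ℝˡ} ( Dh(x)ᵀ( ½ div(c_s(x)m_s(x)) − a_s(x)m_s(x) ) − ½ Dh(x)ᵀ c_s(x) Dh(x) m_s(x) ) dx ds ≤ L, where the supremum is over compactly supported Lipschitz functions h : ℝˡ → ℝ (Dh being the a.e. gradient) and div(c_s m_s) = (div c_s)m_s + c_s Dm_s weakly. Assume additionally that either (i) limsup_{|x|→∞} sup_{s∈[0,t]}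 a_s(x)·x/|x|² < 0, or (ii) for almost every s ∈ [0,t] there exists â_s ∈ W^{1,1}_loc(ℝˡ) with c_s(x)^{-1}( a_s(x) − ½ div c_s(x) ) = Dâ_s(x) for almost every x ∈ ℝˡ. Then ∫₀ᵗ ∫_{ℝˡ} |a_s(x)|² m_s(x) dx ds < ∞. -/

import Mathlib

open MeasureTheory Filter Set Topology RealInnerProductSpace

variable {l : ℕ}

/-- `g` is the weak (Sobolev) gradient of `f` on `ℝˡ`; in particular `f ∈ W^{1,1}_loc`. -/
def HasWeakGrad (f : EuclideanSpace ℝ (Fin l) → ℝ)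
    (g : EuclideanSpace ℝ (Fin l) → EuclideanSpace ℝ (Fin l)) : Prop :=
  LocallyIntegrable f volume ∧ LocallyIntegrable g volume ∧
    ∀ p : EuclideanSpace ℝ (Fin l) → ℝ, ContDiff ℝ (⊤ : ℕ∞) p → HasCompactSupport p →
      ∀ v : EuclideanSpace ℝ (Fin l),
        (∫ x, f x * fderiv ℝ p x v) = - ∫ x, ⟪g x, v⟫ * p x

/-- The rowwise divergence `div c` of an operator-valued (matrix-valued) field `c`. -/
noncomputable def matDiv (c : EuclideanSpace ℝ (Fin l) →
      (EuclideanSpace ℝ (Fin l) →L[ℝ] EuclideanSpace ℝ (Fin l)))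
    (x : EuclideanSpace ℝ (Fin l)) : EuclideanSpace ℝ (Fin l) :=
  ∑ j : Fin l, (fderiv ℝ c x (EuclideanSpace.single j (1 : ℝ)))
    (EuclideanSpace.single j (1 : ℝ))

open scoped Convolution

/-- The convolution of `f` with the normalization of the smooth bump `φ`. -/
noncomputable def mollify {F : Type*} [NormedAddCommGroup F] [NormedSpace ℝ F]
    (φ : ContDiffBump (0 : EuclideanSpace ℝ (Fin l))) (f : EuclideanSpace ℝ (Fin l) → F) :
    EuclideanSpace ℝ (Fin l) → F :=
  φ.normed volume ⋆[ContinuousLinearMap.lsmul ℝ ℝ, volume] f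

section Mollify

variable {F : Type*} [NormedAddCommGroup F] [NormedSpace ℝ F]
  {φ : ContDiffBump (0 : EuclideanSpace ℝ (Fin l))}

theorem mollify_apply (f : EuclideanSpace ℝ (Fin l) → F) (x : EuclideanSpace ℝ (Fin l)) :
    mollify φ f x = ∫ y, φ.normed volume (x - y) • f y :=
  convolution_lsmul_swap

theorem convolutionExists_normed {f : EuclideanSpace ℝ (Fin l) → F}
    (hf : LocallyIntegrable f volume) :
    ConvolutionExists (φ.normed volume) f (ContinuousLinearMap.lsmul ℝ ℝ) volume :=
  φ.hasCompactSupport_normed.convolutionExists_left _ φ.continuous_normed hf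

theorem integrable_normed_sub_smul {f : EuclideanSpace ℝ (Fin l) → F}
    (hf : LocallyIntegrable f volume) (x : EuclideanSpace ℝ (Fin l)) :
    Integrable (fun y => φ.normed volume (x - y) • f y) :=
  (convolutionExists_normed hf x).integrable_swap

theorem contDiff_mollify {f : EuclideanSpace ℝ (Fin l) → F}
    (hf : LocallyIntegrable f volume) : ContDiff ℝ (⊤ : ℕ∞) (mollify φ f) :=
  φ.hasCompactSupport_normed.contDiff_convolution_left _ φ.contDiff_normed hf

theorem HasWeakGrad.hasGradientAt_mollify {f : EuclideanSpace ℝ (Fin l) → ℝ}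
    {g : EuclideanSpace ℝ (Fin l) → EuclideanSpace ℝ (Fin l)} (h : HasWeakGrad f g)
    (x : EuclideanSpace ℝ (Fin l)) : HasGradientAt (mollify φ f) (mollify φ g x) x := by
  obtain ⟨hf, hg, hfg⟩ := h
  have h1 := (φ.hasCompactSupport_normed (μ := volume)).hasFDerivAt_convolution_right
    (ContinuousLinearMap.mul ℝ ℝ) (μ := volume) (f := f) hf (φ.contDiff_normed (n := 1)) x
  have hflip : mollify φ f = f ⋆[ContinuousLinearMap.mul ℝ ℝ, volume] φ.normed volume := by
    ext y
    rw [mollify_apply, convolution_def]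
    simp [mul_comm]
  rw [hasGradientAt_iff_hasFDerivAt, hflip]
  refine h1.congr_fderiv ?_
  ext v
  rw [convolution_precompR_apply _ hf ((φ.hasCompactSupport_normed (μ := volume)).fderiv ℝ)
    ((φ.contDiff_normed (μ := volume) (n := 1)).continuous_fderiv one_ne_zero),
    InnerProductSpace.toDual_apply_apply, mollify_apply, ← real_inner_comm,
    ← integral_inner (integrable_normed_sub_smul hg x), convolution_def]
  have hp : ContDiff ℝ (⊤ : ℕ∞) (fun y => φ.normed volume (x - y)) :=
    φ.contDiff_normed.comp (contDiff_const.sub contDiff_id)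
  have hpc : HasCompactSupport (fun y => φ.normed volume (x - y)) :=
    (φ.hasCompactSupport_normed (μ := volume)).comp_homeomorph (Homeomorph.subLeft x)
  have hw := hfg _ hp hpc v
  have hd : ∀ y, fderiv ℝ (fun y => φ.normed volume (x - y)) y v
      = - fderiv ℝ (φ.normed volume) (x - y) v := by
    intro y
    have h2 : HasFDerivAt (fun y => φ.normed volume (x - y))
        ((fderiv ℝ (φ.normed volume) (x - y)).comp
          (-ContinuousLinearMap.id ℝ (EuclideanSpace ℝ (Fin l)))) y :=
      HasFDerivAt.comp (g := φ.normed volume) y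
        ((φ.contDiff_normed (μ := volume) (n := 1)).differentiable one_ne_zero (x - y)).hasFDerivAt
        ((hasFDerivAt_id y).const_sub x)
    rw [h2.fderiv]
    simp
  simp only [hd, mul_neg, integral_neg, neg_inj] at hw
  simp only [ContinuousLinearMap.mul_apply']
  rw [hw]
  congr 1; ext y; rw [real_inner_smul_right, real_inner_comm, mul_comm]

theorem norm_mollify_le (f : EuclideanSpace ℝ (Fin l) → F)
    (x : EuclideanSpace ℝ (Fin l)) :
    ‖mollify φ f x‖ ≤ mollify φ (fun y => ‖f y‖) x := by
  rw [mollify_apply, mollify_apply]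
  refine (norm_integral_le_integral_norm _).trans (le_of_eq ?_)
  congr 1; ext y
  rw [norm_smul, Real.norm_of_nonneg (φ.nonneg_normed _), smul_eq_mul]

theorem norm_mollify_le_of_ae_le {f : EuclideanSpace ℝ (Fin l) → F} {B : ℝ}
    (x : EuclideanSpace ℝ (Fin l))
    (hB : ∀ᵐ y, dist y x ≤ φ.rOut → ‖f y‖ ≤ B) : ‖mollify φ f x‖ ≤ B := by
  rw [mollify_apply]
  have h1 : ∫ y, φ.normed volume (x - y) = 1 := by
    rw [integral_sub_left_eq_self (φ.normed volume), φ.integral_normed]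
  have hi : Integrable (fun y => φ.normed volume (x - y)) :=
    φ.integrable_normed.comp_sub_left x
  calc _ ≤ ∫ y, φ.normed volume (x - y) * B := by
        refine norm_integral_le_of_norm_le (hi.mul_const B) ?_
        filter_upwards [hB] with y hy
        rw [norm_smul, Real.norm_of_nonneg (φ.nonneg_normed _)]
        by_cases hxy : dist y x ≤ φ.rOut
        · exact mul_le_mul_of_nonneg_left (hy hxy) (φ.nonneg_normed _)
        · have : φ.normed volume (x - y) = 0 := by
            rw [← Function.notMem_support, φ.support_normed_eq]
            simp only [Metric.mem_ball, dist_zero_right, not_lt]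
            rw [dist_comm, dist_eq_norm] at hxy
            exact (not_le.1 hxy).le
          simp [this]
    _ = B := by rw [integral_mul_const, h1, one_mul]

theorem mollify_congr_of_eqOn {f f' : EuclideanSpace ℝ (Fin l) → F}
    (x : EuclideanSpace ℝ (Fin l)) (h : ∀ y, dist y x < φ.rOut → f y = f' y) :
    mollify φ f x = mollify φ f' x := by
  rw [mollify_apply, mollify_apply]
  congr 1; ext y
  by_cases hxy : dist y x < φ.rOut
  · rw [h y hxy]
  · have : φ.normed volume (x - y) = 0 := by
      rw [← Function.notMem_support, φ.support_normed_eq]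
      rw [dist_comm, dist_eq_norm] at hxy
      simpa using hxy
    simp [this]

end Mollify

/-- A sequence of smooth bumps with radii tending to zero. -/
noncomputable def shrinkingBump (l n : ℕ) : ContDiffBump (0 : EuclideanSpace ℝ (Fin l)) where
  rIn := 1 / (2 * ((n : ℝ) + 1))
  rOut := 1 / ((n : ℝ) + 1)
  rIn_pos := by positivity
  rIn_lt_rOut := by
    apply one_div_lt_one_div_of_lt <;> linarith [Nat.cast_nonneg (α := ℝ) n]

theorem rOut_shrinkingBump_le_one (n : ℕ) : (shrinkingBump l n).rOut ≤ 1 := by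
  change 1 / ((n : ℝ) + 1) ≤ 1
  rw [div_le_one (by positivity)]
  linarith [Nat.cast_nonneg (α := ℝ) n]

theorem ae_tendsto_mollify {F : Type*} [NormedAddCommGroup F] [NormedSpace ℝ F] [CompleteSpace F]
    {f : EuclideanSpace ℝ (Fin l) → F} (hf : LocallyIntegrable f volume) :
    ∀ᵐ x, Tendsto (fun n => mollify (shrinkingBump l n) f x) atTop (𝓝 (f x)) := by
  refine ContDiffBump.ae_convolution_tendsto_right_of_locallyIntegrable (K := 2) ?_ ?_ hf
  · exact tendsto_one_div_add_atTop_nhds_zero_nat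
  · refine Eventually.of_forall fun n => le_of_eq ?_
    change 1 / ((n : ℝ) + 1) = 2 * (1 / (2 * ((n : ℝ) + 1)))
    field_simp

theorem tendsto_integral_norm_mollify_sub {F : Type*} [NormedAddCommGroup F] [NormedSpace ℝ F]
    [CompleteSpace F] {u : EuclideanSpace ℝ (Fin l) → F} (hu : Integrable u) :
    Tendsto (fun n => ∫ x, ‖mollify (shrinkingBump l n) u x - u x‖) atTop (𝓝 0) := by
  set w : ℕ → EuclideanSpace ℝ (Fin l) → ℝ :=
    fun n => mollify (shrinkingBump l n) (fun y => ‖u y‖) with hw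
  have hwi : ∀ n, Integrable (w n) := fun n =>
    (shrinkingBump l n).integrable_normed.integrable_convolution _ hu.norm
  have hui : ∀ n, Integrable (mollify (shrinkingBump l n) u) := fun n =>
    (shrinkingBump l n).integrable_normed.integrable_convolution _ hu
  have hwint : ∀ n, ∫ x, w n x = ∫ x, ‖u x‖ := fun n => by
    have := integral_convolution (ContinuousLinearMap.lsmul ℝ ℝ) (μ := volume) (ν := volume)
      (shrinkingBump l n).integrable_normed hu.norm
    rw [(shrinkingBump l n).integral_normed] at this
    exact this.trans (by simp)
  have hneg : Tendsto (fun n => ∫ x, max (‖u x‖ - w n x) 0) atTop (𝓝 0) := by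
    have := tendsto_integral_of_dominated_convergence (F := fun n x => max (‖u x‖ - w n x) 0)
      (f := fun _ => 0) (fun x => ‖u x‖) (μ := volume)
      (fun n => ((hu.norm.sub (hwi n)).pos_part).aestronglyMeasurable) hu.norm
      (fun n => ae_of_all _ fun x => by
        have : 0 ≤ w n x := (norm_nonneg _).trans (norm_mollify_le u x)
        rw [Real.norm_of_nonneg (le_max_right _ _)]
        exact max_le (by linarith) (norm_nonneg _))
      (by
        filter_upwards [ae_tendsto_mollify hu.norm.locallyIntegrable] with x hx
        have := ((tendsto_const_nhds (x := ‖u x‖)).sub hx).max (tendsto_const_nhds (x := (0:ℝ)))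
        simpa using this)
    simpa using this
  have hmin : Tendsto (fun n => ∫ x, min ‖mollify (shrinkingBump l n) u x - u x‖ (2 * ‖u x‖))
      atTop (𝓝 0) := by
    have := tendsto_integral_of_dominated_convergence
      (F := fun n x => min ‖mollify (shrinkingBump l n) u x - u x‖ (2 * ‖u x‖))
      (f := fun _ => 0) (fun x => 2 * ‖u x‖) (μ := volume)
      (fun n => (((hui n).sub hu).norm.inf (hu.norm.const_mul 2)).aestronglyMeasurable)
      (hu.norm.const_mul 2)
      (fun n => ae_of_all _ fun x => by
        rw [Real.norm_of_nonneg (le_min (norm_nonneg _) (by positivity))]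
        exact min_le_right _ _)
      (by
        filter_upwards [ae_tendsto_mollify hu.locallyIntegrable] with x hx
        have := (hx.sub (tendsto_const_nhds (x := u x))).norm.min
          (tendsto_const_nhds (x := 2 * ‖u x‖))
        simpa using this)
    simpa using this
  refine tendsto_of_tendsto_of_tendsto_of_le_of_le tendsto_const_nhds
    (by simpa using hmin.add hneg) (fun n => by positivity) (fun n => ?_)
  have h1 : ∫ x, (w n x - ‖u x‖) = 0 := by
    rw [integral_sub (hwi n) hu.norm, hwint, sub_self]
  calc ∫ x, ‖mollify (shrinkingBump l n) u x - u x‖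
      ≤ ∫ x, ((min ‖mollify (shrinkingBump l n) u x - u x‖ (2 * ‖u x‖) +
          max (‖u x‖ - w n x) 0) + (w n x - ‖u x‖)) := by
        refine integral_mono ((hui n).sub hu).norm
          (((((hui n).sub hu).norm.inf (hu.norm.const_mul 2)).add
            (hu.norm.sub (hwi n)).pos_part).add ((hwi n).sub hu.norm)) fun x => ?_
        have h2 : ‖mollify (shrinkingBump l n) u x - u x‖ ≤ w n x + ‖u x‖ :=
          (norm_sub_le _ _).trans (by gcongr; exact norm_mollify_le u x)
        rcases le_total ‖mollify (shrinkingBump l n) u x - u x‖ (2 * ‖u x‖) with h | h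
        · simp only [min_eq_left h]
          linarith [le_max_left (‖u x‖ - w n x) 0]
        · simp only [min_eq_right h]
          linarith [le_max_right (‖u x‖ - w n x) 0]
    _ = _ := by
        rw [integral_add, h1, add_zero, integral_add]
        · exact ((hui n).sub hu).norm.inf (hu.norm.const_mul 2)
        · exact (hu.norm.sub (hwi n)).pos_part
        · exact (((hui n).sub hu).norm.inf (hu.norm.const_mul 2)).add
            (hu.norm.sub (hwi n)).pos_part
        · exact (hwi n).sub hu.norm

theorem HasWeakGrad.norm_integral_exp_neg_mul_le {f : EuclideanSpace ℝ (Fin l) → ℝ}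
    {g : EuclideanSpace ℝ (Fin l) → EuclideanSpace ℝ (Fin l)} (h : HasWeakGrad f g)
    (hf0 : ∀ x, 0 ≤ f x) {p : EuclideanSpace ℝ (Fin l) → ℝ} (hp : ContDiff ℝ (⊤ : ℕ∞) p)
    (hpc : HasCompactSupport p) (v : EuclideanSpace ℝ (Fin l)) {k : ℝ} (hk : 0 < k) :
    ‖∫ x, Real.exp (-(k * f x)) * (⟪g x, v⟫ * p x)‖ ≤ k⁻¹ * ∫ x, ‖fderiv ℝ p x v‖ := by
  obtain ⟨r, hr⟩ := hpc.isCompact.isBounded.subset_closedBall (0 : EuclideanSpace ℝ (Fin l))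
  obtain ⟨C, hC⟩ := hpc.exists_bound_of_continuous hp.continuous
  have hC0 : 0 ≤ C := (norm_nonneg _).trans (hC 0)
  set u := (Metric.closedBall (0 : EuclideanSpace ℝ (Fin l)) (r + 1)).indicator g with hu_def
  have hu : Integrable u := (integrable_indicator_iff Metric.isClosed_closedBall.measurableSet).2
    (h.2.1.integrableOn_isCompact (isCompact_closedBall _ _))
  have hp0 : ∀ x, ¬ ‖x‖ ≤ r → p x = 0 := fun x hx =>
    image_eq_zero_of_notMem_tsupport fun hx' => hx (by simpa using hr hx')
  have hug : ∀ x, ⟪u x, v⟫ * p x = ⟪g x, v⟫ * p x := by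
    intro x
    by_cases hx : ‖x‖ ≤ r
    · rw [hu_def, indicator_of_mem]
      simp only [Metric.mem_closedBall, dist_zero_right]; linarith
    · simp [hp0 x hx]
  have hmug : ∀ n x, ⟪mollify (shrinkingBump l n) u x, v⟫ * p x
      = ⟪mollify (shrinkingBump l n) g x, v⟫ * p x := by
    intro n x
    by_cases hx : ‖x‖ ≤ r
    · congr 2
      refine mollify_congr_of_eqOn x fun y hy => ?_
      rw [hu_def, indicator_of_mem]
      have := rOut_shrinkingBump_le_one (l := l) n
      have h2 : ‖y‖ ≤ dist y x + ‖x‖ := by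
        rw [dist_eq_norm]; simpa using norm_add_le (y - x) x
      simp only [Metric.mem_closedBall, dist_zero_right]
      linarith
    · simp [hp0 x hx]
  set F : ℕ → EuclideanSpace ℝ (Fin l) → ℝ := fun n => mollify (shrinkingBump l n) f with hF
  have hF0 : ∀ n x, 0 ≤ F n x := fun n x => by
    rw [hF]; dsimp only
    rw [mollify_apply]
    exact integral_nonneg fun y => mul_nonneg (ContDiffBump.nonneg_normed _ _) (hf0 y)
  have hFc : ∀ n, ContDiff ℝ (⊤ : ℕ∞) (F n) := fun n => contDiff_mollify h.1
  have hexp1 : ∀ z : ℝ, 0 ≤ z → Real.exp (-(k * z)) ≤ 1 := fun z hz =>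
    Real.exp_le_one_iff.2 (by have := mul_nonneg hk.le hz; linarith)
  have hui : ∀ n, Integrable (mollify (shrinkingBump l n) u) := fun n =>
    (shrinkingBump l n).integrable_normed.integrable_convolution _ hu
  have hEm : ∀ n, AEStronglyMeasurable (fun x => Real.exp (-(k * F n x))) volume := fun n =>
    (Real.continuous_exp.comp ((continuous_const.mul (hFc n).continuous).neg)).aestronglyMeasurable
  have hmul : ∀ w : EuclideanSpace ℝ (Fin l) → EuclideanSpace ℝ (Fin l), Integrable w →
      ∀ n, Integrable (fun x => Real.exp (-(k * F n x)) * (⟪w x, v⟫ * p x)) := by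
    intro w hw n
    refine ((hw.inner_const v).mul_bdd hp.continuous.aestronglyMeasurable
      (ae_of_all _ hC)).bdd_mul (hEm n) (c := 1) (ae_of_all _ fun x => ?_)
    rw [Real.norm_of_nonneg (Real.exp_pos _).le]
    exact hexp1 _ (hF0 n x)
  -- The limit of the smooth integrals.
  have hlim : Tendsto (fun n => ∫ x, Real.exp (-(k * F n x)) *
      (⟪mollify (shrinkingBump l n) g x, v⟫ * p x)) atTop
      (𝓝 (∫ x, Real.exp (-(k * f x)) * (⟪g x, v⟫ * p x))) := by
    simp only [← hug, ← hmug]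
    have h1 : Tendsto (fun n => ∫ x, Real.exp (-(k * F n x)) * (⟪u x, v⟫ * p x)) atTop
        (𝓝 (∫ x, Real.exp (-(k * f x)) * (⟪u x, v⟫ * p x))) := by
      refine tendsto_integral_of_dominated_convergence (fun x => ‖⟪u x, v⟫‖ * C)
        (fun n => (hmul u hu n).aestronglyMeasurable) ((hu.inner_const v).norm.mul_const C)
        (fun n => ae_of_all _ fun x => ?_) ?_
      · rw [norm_mul, norm_mul, Real.norm_of_nonneg (Real.exp_pos _).le]
        have := hexp1 _ (hF0 n x)
        calc _ ≤ 1 * (‖⟪u x, v⟫‖ * C) := by gcongr; exact hC x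
          _ = _ := one_mul _
      · filter_upwards [ae_tendsto_mollify h.1] with x hx
        exact ((Real.continuous_exp.tendsto _).comp (hx.const_mul k).neg).mul_const _
    have h2 : Tendsto (fun n => ∫ x, Real.exp (-(k * F n x)) *
        (⟪mollify (shrinkingBump l n) u x - u x, v⟫ * p x)) atTop (𝓝 0) := by
      refine squeeze_zero_norm (a := fun n =>
        (∫ x, ‖mollify (shrinkingBump l n) u x - u x‖) * (‖v‖ * C)) (fun n => ?_)
        (by simpa using (tendsto_integral_norm_mollify_sub hu).mul_const (‖v‖ * C))
      rw [← integral_mul_const]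
      refine norm_integral_le_of_norm_le (((hui n).sub hu).norm.mul_const _)
        (ae_of_all _ fun x => ?_)
      rw [norm_mul, norm_mul, Real.norm_of_nonneg (Real.exp_pos _).le]
      have := hexp1 _ (hF0 n x)
      calc _ ≤ 1 * ((‖mollify (shrinkingBump l n) u x - u x‖ * ‖v‖) * C) := by
            gcongr
            · exact norm_inner_le_norm _ _
            · exact hC x
        _ = _ := by ring
    have h3 := h2.add h1
    rw [zero_add] at h3
    refine h3.congr fun n => ?_
    have hsub : Integrable (fun x => mollify (shrinkingBump l n) u x - u x) := (hui n).sub hu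
    rw [← integral_add (hmul _ hsub n) (hmul u hu n)]
    congr 1; ext x
    simp only [inner_sub_left]; ring
  refine le_of_tendsto hlim.norm (Eventually.of_forall fun n => ?_)
  -- Integration by parts for the smooth approximations.
  set G : EuclideanSpace ℝ (Fin l) → ℝ := fun x => k⁻¹ * (1 - Real.exp (-(k * F n x))) with hG
  have hGc : ContDiff ℝ (⊤ : ℕ∞) G := by
    rw [hG]
    exact contDiff_const.mul (contDiff_const.sub (contDiff_const.mul (hFc n)).neg.exp)
  have hGd : ∀ x, fderiv ℝ G x v
      = Real.exp (-(k * F n x)) * ⟪mollify (shrinkingBump l n) g x, v⟫ := by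
    intro x
    have h1 := (h.hasGradientAt_mollify (φ := shrinkingBump l n) x).hasFDerivAt
    have h2 : HasFDerivAt G _ x := (((h1.const_mul k).neg.exp).const_sub 1).const_mul k⁻¹
    rw [h2.fderiv]
    simp only [smul_neg, neg_neg, smul_apply, InnerProductSpace.toDual_apply_apply, smul_eq_mul]
    change k⁻¹ * (Real.exp (-(k * F n x)) * (k * _)) = _
    field_simp
  have hpd : Continuous fun x => fderiv ℝ p x v :=
    (hp.continuous_fderiv (by simp)).clm_apply continuous_const
  have hpdc : HasCompactSupport fun x => fderiv ℝ p x v := hpc.fderiv_apply ℝ v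
  have hGdc : Continuous fun x => fderiv ℝ G x v :=
    (hGc.continuous_fderiv (by simp)).clm_apply continuous_const
  have hparts := integral_mul_fderiv_eq_neg_fderiv_mul_of_integrable (μ := volume)
    (f := G) (g := p) (v := v)
    ((hGdc.mul hp.continuous).integrable_of_hasCompactSupport hpc.mul_left)
    ((hGc.continuous.mul hpd).integrable_of_hasCompactSupport hpdc.mul_left)
    ((hGc.continuous.mul hp.continuous).integrable_of_hasCompactSupport hpc.mul_left)
    (fun x _ => hGc.differentiable (by simp) x) (fun x _ => hp.differentiable (by simp) x)
  simp only [hGd, mul_assoc] at hparts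
  rw [← norm_neg, ← hparts, ← integral_const_mul]
  refine norm_integral_le_of_norm_le
    ((hpd.integrable_of_hasCompactSupport hpdc).norm.const_mul _) (ae_of_all _ fun x => ?_)
  rw [norm_mul]
  gcongr
  have h1 := hexp1 _ (hF0 n x)
  have h2 := Real.exp_pos (-(k * F n x))
  rw [hG]
  dsimp only
  rw [norm_mul, Real.norm_of_nonneg (inv_pos.2 hk).le, Real.norm_of_nonneg (by linarith)]
  have : 0 < k⁻¹ := inv_pos.2 hk
  nlinarith

/-- The weak gradient of a nonnegative function vanishes a.e. on its zero set. -/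
theorem HasWeakGrad.ae_eq_zero_of_eq_zero {f : EuclideanSpace ℝ (Fin l) → ℝ}
    {g : EuclideanSpace ℝ (Fin l) → EuclideanSpace ℝ (Fin l)} (h : HasWeakGrad f g)
    (hf0 : ∀ x, 0 ≤ f x) (hfm : Measurable f) : ∀ᵐ x, f x = 0 → g x = 0 := by
  have hZ : MeasurableSet {x | f x = 0} := hfm (measurableSet_singleton 0)
  have key : ∀ᵐ x, ({x | f x = 0}).indicator g x = 0 := by
    refine ae_eq_zero_of_integral_contDiff_smul_eq_zero (h.2.1.indicator hZ) fun p hp hpc => ?_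
    have hgp : Integrable (fun x => p x • g x) :=
      h.2.1.integrable_smul_left_of_hasCompactSupport hp.continuous hpc
    have hgpi : Integrable (fun x => p x • ({x | f x = 0}).indicator g x) :=
      (h.2.1.indicator hZ).integrable_smul_left_of_hasCompactSupport hp.continuous hpc
    refine ext_inner_right ℝ fun v => ?_
    rw [inner_zero_left, ← real_inner_comm, ← integral_inner hgpi]
    have hgv : Integrable (fun x => ⟪g x, v⟫ * p x) := by
      refine (hgp.inner_const v).congr (ae_of_all _ fun x => ?_)
      simp only [real_inner_smul_left]; ring
    have hlim : Tendsto (fun n : ℕ => ∫ x, Real.exp (-(((n : ℝ) + 1) * f x)) * (⟪g x, v⟫ * p x))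
        atTop (𝓝 (∫ x, ({x | f x = 0}).indicator (fun x => ⟪g x, v⟫ * p x) x)) := by
      refine tendsto_integral_of_dominated_convergence (fun x => ‖⟪g x, v⟫ * p x‖)
        (fun n => ?_) hgv.norm (fun n => ae_of_all _ fun x => ?_) (ae_of_all _ fun x => ?_)
      · exact ((hfm.const_mul _).neg.exp.aestronglyMeasurable).mul hgv.aestronglyMeasurable
      · rw [norm_mul, Real.norm_of_nonneg (Real.exp_pos _).le]
        refine mul_le_of_le_one_left (norm_nonneg _) (Real.exp_le_one_iff.2 ?_)
        have := hf0 x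
        have : 0 ≤ ((n : ℝ) + 1) * f x := by positivity
        linarith
      · by_cases hx : f x = 0
        · simp [hx]
        · rw [indicator_of_notMem (by simpa using hx)]
          have hpos : 0 < f x := lt_of_le_of_ne (hf0 x) (Ne.symm hx)
          have h1 : Tendsto (fun n : ℕ => ((n : ℝ) + 1) * f x) atTop atTop :=
            (tendsto_atTop_add_const_right _ _ tendsto_natCast_atTop_atTop).atTop_mul_const hpos
          simpa using (Real.tendsto_exp_neg_atTop_nhds_zero.comp h1).mul_const (⟪g x, v⟫ * p x)
    have hbound : Tendsto (fun n : ℕ => ((n : ℝ) + 1)⁻¹ * ∫ x, ‖fderiv ℝ p x v‖) atTop (𝓝 0) := by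
      simpa using (tendsto_one_div_add_atTop_nhds_zero_nat (𝕜 := ℝ)).mul_const
        (∫ x, ‖fderiv ℝ p x v‖)
    have h0 := tendsto_nhds_unique hlim (squeeze_zero_norm
      (fun n : ℕ => h.norm_integral_exp_neg_mul_le hf0 hp hpc v (by positivity)) hbound)
    refine Eq.trans ?_ h0
    congr 1; ext x
    by_cases hx : f x = 0
    · simp [hx, real_inner_smul_right, real_inner_comm, mul_comm]
    · simp [hx]
  filter_upwards [key] with x hx hfx
  rwa [indicator_of_mem (by simpa using hfx)] at hx

theorem norm_apply_le_of_symm_of_inner_le {V : Type*} [NormedAddCommGroup V]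
    [InnerProductSpace ℝ V] {T : V →L[ℝ] V} {Λ : ℝ} (hΛ : 0 < Λ)
    (hsymm : ∀ y y', ⟪T y, y'⟫ = ⟪y, T y'⟫) (hnonneg : ∀ y, 0 ≤ ⟪T y, y⟫)
    (hle : ∀ y, ⟪T y, y⟫ ≤ Λ * ‖y‖ ^ 2) (y : V) : ‖T y‖ ≤ Λ * ‖y‖ := by
  have h1 := hnonneg (Λ • y - T y)
  have h2 : ⟪T (T y), y⟫ = ‖T y‖ ^ 2 := by rw [hsymm, real_inner_self_eq_norm_sq]
  simp only [map_sub, map_smul, inner_sub_left, inner_sub_right, real_inner_smul_left,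
    real_inner_smul_right, h2, real_inner_self_eq_norm_sq] at h1
  have h3 := hle (T y)
  have h4 := hle y
  have h5 : ‖T y‖ ^ 2 ≤ (Λ * ‖y‖) ^ 2 := by
    have : Λ * ‖T y‖ ^ 2 ≤ Λ * (Λ * ‖y‖) ^ 2 := by
      nlinarith [mul_le_mul_of_nonneg_left h4 (sq_nonneg Λ)]
    exact le_of_mul_le_mul_left this hΛ
  exact (sq_le_sq₀ (norm_nonneg _) (by positivity)).1 h5

theorem norm_matDiv_le {c : EuclideanSpace ℝ (Fin l) →
    (EuclideanSpace ℝ (Fin l) →L[ℝ] EuclideanSpace ℝ (Fin l))} {K : ℝ}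
    {x : EuclideanSpace ℝ (Fin l)} (h : ‖fderiv ℝ c x‖ ≤ K) : ‖matDiv c x‖ ≤ l * K := by
  have : ∀ j ∈ (Finset.univ : Finset (Fin l)),
      ‖(fderiv ℝ c x (EuclideanSpace.single j (1 : ℝ))) (EuclideanSpace.single j (1 : ℝ))‖ ≤ K := by
    intro j _
    have h1 := (fderiv ℝ c x (EuclideanSpace.single j (1 : ℝ))).le_opNorm
      (EuclideanSpace.single j (1 : ℝ))
    have h2 := (fderiv ℝ c x).le_opNorm (EuclideanSpace.single j (1 : ℝ))
    simp only [PiLp.norm_single, norm_one, mul_one] at h1 h2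
    exact h1.trans (h2.trans h)
  simpa [matDiv] using norm_sum_le_of_le _ this

theorem continuous_matDiv {c : EuclideanSpace ℝ (Fin l) →
    (EuclideanSpace ℝ (Fin l) →L[ℝ] EuclideanSpace ℝ (Fin l))} (h : ContDiff ℝ 1 c) :
    Continuous (matDiv c) := by
  have := h.continuous_fderiv one_ne_zero
  unfold matDiv
  fun_prop

/-- The coefficients and the density at a fixed time: `c` is uniformly elliptic of class `C¹`
with divergence bounded by `K`, `a` has linear growth, and `m` is a probability density with
gradient `Dm` of finite Fisher information. -/
structure AdmissibleSlice (θ M K : ℝ)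
    (c : EuclideanSpace ℝ (Fin l) → (EuclideanSpace ℝ (Fin l) →L[ℝ] EuclideanSpace ℝ (Fin l)))
    (a : EuclideanSpace ℝ (Fin l) → EuclideanSpace ℝ (Fin l))
    (m : EuclideanSpace ℝ (Fin l) → ℝ)
    (Dm : EuclideanSpace ℝ (Fin l) → EuclideanSpace ℝ (Fin l)) : Prop where
  θ_pos : 0 < θ
  M_pos : 0 < M
  symm : ∀ x y y', ⟪c x y, y'⟫ = ⟪y, c x y'⟫
  ell_lower : ∀ x y, θ * ‖y‖ ^ 2 ≤ ⟪c x y, y⟫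
  ell_upper : ∀ x y, ⟪c x y, y⟫ ≤ θ⁻¹ * ‖y‖ ^ 2
  contDiff : ContDiff ℝ 1 c
  norm_matDiv_le : ∀ x, ‖matDiv c x‖ ≤ K
  measurable_drift : Measurable a
  norm_drift_le : ∀ x, ‖a x‖ ≤ M * (1 + ‖x‖)
  nonneg : ∀ x, 0 ≤ m x
  integrable : Integrable m
  integral_eq_one : ∫ x, m x = 1
  measurable_grad : Measurable Dm
  grad_eq_zero : ∀ᵐ x, m x = 0 → Dm x = 0
  integrable_fisher : Integrable fun x => ‖Dm x‖ ^ 2 / m x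

/-- The integrand of the variational functional, with `g` in place of the gradient of the
test function. -/
noncomputable def variationalIntegrand
    (c : EuclideanSpace ℝ (Fin l) → (EuclideanSpace ℝ (Fin l) →L[ℝ] EuclideanSpace ℝ (Fin l)))
    (a : EuclideanSpace ℝ (Fin l) → EuclideanSpace ℝ (Fin l))
    (m : EuclideanSpace ℝ (Fin l) → ℝ)
    (Dm g : EuclideanSpace ℝ (Fin l) → EuclideanSpace ℝ (Fin l))
    (x : EuclideanSpace ℝ (Fin l)) : ℝ :=
  ⟪g x, ((1 : ℝ) / 2) • (m x • matDiv c x + (c x) (Dm x)) - m x • a x⟫ -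
    (1 / 2) * ⟪(c x) (g x), g x⟫ * m x

namespace AdmissibleSlice

variable {θ M K : ℝ}
  {c : EuclideanSpace ℝ (Fin l) → (EuclideanSpace ℝ (Fin l) →L[ℝ] EuclideanSpace ℝ (Fin l))}
  {a : EuclideanSpace ℝ (Fin l) → EuclideanSpace ℝ (Fin l)}
  {m : EuclideanSpace ℝ (Fin l) → ℝ}
  {Dm g : EuclideanSpace ℝ (Fin l) → EuclideanSpace ℝ (Fin l)}

theorem K_nonneg (H : AdmissibleSlice θ M K c a m Dm) : 0 ≤ K :=
  (norm_nonneg _).trans (H.norm_matDiv_le 0)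

theorem inner_nonneg (H : AdmissibleSlice θ M K c a m Dm) (x y : EuclideanSpace ℝ (Fin l)) :
    0 ≤ ⟪c x y, y⟫ :=
  (mul_nonneg H.θ_pos.le (sq_nonneg _)).trans (H.ell_lower x y)

theorem norm_apply_le (H : AdmissibleSlice θ M K c a m Dm) (x y : EuclideanSpace ℝ (Fin l)) :
    ‖c x y‖ ≤ θ⁻¹ * ‖y‖ :=
  norm_apply_le_of_symm_of_inner_le (inv_pos.2 H.θ_pos) (H.symm x) (H.inner_nonneg x)
    (H.ell_upper x) y

theorem abs_inner_apply_le (H : AdmissibleSlice θ M K c a m Dm)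
    (x y z : EuclideanSpace ℝ (Fin l)) : |⟪c x y, z⟫| ≤ θ⁻¹ * (‖y‖ * ‖z‖) :=
  (abs_real_inner_le_norm _ _).trans (by
    rw [← mul_assoc]; exact mul_le_mul_of_nonneg_right (H.norm_apply_le x y) (norm_nonneg _))

theorem integrable_grad (H : AdmissibleSlice θ M K c a m Dm) : Integrable Dm := by
  refine (H.integrable.add H.integrable_fisher).mono' H.measurable_grad.aestronglyMeasurable ?_
  filter_upwards [H.grad_eq_zero] with x hx
  rcases (H.nonneg x).eq_or_lt with h0 | hpos
  · simp [hx h0.symm, ← h0]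
  · have h1 : ‖Dm x‖ ^ 2 / m x * m x = ‖Dm x‖ ^ 2 := div_mul_cancel₀ _ hpos.ne'
    have h2 : 0 ≤ ‖Dm x‖ ^ 2 / m x := by positivity
    change ‖Dm x‖ ≤ m x + ‖Dm x‖ ^ 2 / m x
    refine (sq_le_sq₀ (norm_nonneg _) (by linarith)).1 ?_
    nlinarith [sq_nonneg (m x), sq_nonneg (‖Dm x‖ ^ 2 / m x)]

theorem abs_variationalIntegrand_le (H : AdmissibleSlice θ M K c a m Dm) {B r : ℝ}
    (hB : 0 ≤ B) (hr : 0 ≤ r) {x : EuclideanSpace ℝ (Fin l)} (hg : ‖g x‖ ≤ B)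
    (hgr : r < ‖x‖ → g x = 0) :
    ‖variationalIntegrand c a m Dm g x‖ ≤
      B * ((1 / 2) * θ⁻¹) * ‖Dm x‖ + (B * (K / 2 + M * (1 + r)) + (1 / 2) * θ⁻¹ * B ^ 2) * m x := by
  have hθ := inv_pos.2 H.θ_pos
  have hm := H.nonneg x
  have hK := H.K_nonneg
  have hM := H.M_pos
  by_cases hx : r < ‖x‖
  · rw [variationalIntegrand, hgr hx]
    simp only [inner_zero_left, map_zero, mul_zero, zero_mul, sub_zero, norm_zero]
    positivity
  · have h1 : ‖((1 : ℝ) / 2) • (m x • matDiv c x + (c x) (Dm x)) - m x • a x‖ ≤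
        (1 / 2) * (m x * K + θ⁻¹ * ‖Dm x‖) + m x * (M * (1 + r)) := by
      refine (norm_sub_le _ _).trans (add_le_add ?_ ?_)
      · rw [norm_smul, Real.norm_of_nonneg (by norm_num : (0 : ℝ) ≤ 1 / 2)]
        gcongr
        refine (norm_add_le _ _).trans (add_le_add ?_ (H.norm_apply_le _ _))
        rw [norm_smul, Real.norm_of_nonneg hm]
        gcongr
        exact H.norm_matDiv_le x
      · rw [norm_smul, Real.norm_of_nonneg hm]
        gcongr
        refine (H.norm_drift_le x).trans ?_
        gcongr
        exact not_lt.1 hx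
    have h2 : ‖⟪(c x) (g x), g x⟫‖ ≤ θ⁻¹ * (B * B) :=
      (H.abs_inner_apply_le x (g x) (g x)).trans (by gcongr)
    calc ‖variationalIntegrand c a m Dm g x‖
        ≤ ‖g x‖ * ‖((1 : ℝ) / 2) • (m x • matDiv c x + (c x) (Dm x)) - m x • a x‖ +
          (1 / 2) * ‖⟪(c x) (g x), g x⟫‖ * m x := by
          refine (norm_sub_le _ _).trans (add_le_add (norm_inner_le_norm _ _) (le_of_eq ?_))
          rw [norm_mul, norm_mul, Real.norm_of_nonneg hm,
            Real.norm_of_nonneg (by norm_num : (0 : ℝ) ≤ 1 / 2)]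
      _ ≤ B * ((1 / 2) * (m x * K + θ⁻¹ * ‖Dm x‖) + m x * (M * (1 + r))) +
          (1 / 2) * (θ⁻¹ * (B * B)) * m x := by gcongr
      _ = _ := by ring

theorem aestronglyMeasurable_variationalIntegrand (H : AdmissibleSlice θ M K c a m Dm)
    (hg : AEStronglyMeasurable g) :
    AEStronglyMeasurable (variationalIntegrand c a m Dm g) := by
  have hcont : Continuous fun p : EuclideanSpace ℝ (Fin l) × EuclideanSpace ℝ (Fin l) =>
      c p.1 p.2 := (H.contDiff.continuous.comp continuous_fst).clm_apply continuous_snd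
  have hc1 : AEStronglyMeasurable (fun x => c x (Dm x)) :=
    hcont.comp_aestronglyMeasurable
      (aestronglyMeasurable_id.prodMk H.measurable_grad.aestronglyMeasurable)
  have hc2 : AEStronglyMeasurable (fun x => c x (g x)) :=
    hcont.comp_aestronglyMeasurable (aestronglyMeasurable_id.prodMk hg)
  have hm := H.integrable.aestronglyMeasurable
  have hd := (continuous_matDiv H.contDiff).aestronglyMeasurable (μ := volume)
  have ha := H.measurable_drift.aestronglyMeasurable (μ := volume)
  have h1 : AEStronglyMeasurable fun x =>
      ((1 : ℝ) / 2) • (m x • matDiv c x + (c x) (Dm x)) - m x • a x :=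
    (((hm.smul hd).add hc1).const_smul ((1 : ℝ) / 2)).sub (hm.smul ha)
  have h2 : AEStronglyMeasurable fun x => (1 / 2) * ⟪(c x) (g x), g x⟫ * m x :=
    ((hc2.inner hg).const_mul (1 / 2)).mul hm
  exact (hg.inner h1).sub h2

theorem integrable_variationalIntegrand (H : AdmissibleSlice θ M K c a m Dm) {B r : ℝ}
    (hB : 0 ≤ B) (hr : 0 ≤ r) (hgm : AEStronglyMeasurable g) (hg : ∀ᵐ x, ‖g x‖ ≤ B)
    (hgr : ∀ x, r < ‖x‖ → g x = 0) : Integrable (variationalIntegrand c a m Dm g) := by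
  refine ((H.integrable_grad.norm.const_mul (B * ((1 / 2) * θ⁻¹))).add
    (H.integrable.const_mul (B * (K / 2 + M * (1 + r)) + (1 / 2) * θ⁻¹ * B ^ 2))).mono'
    (H.aestronglyMeasurable_variationalIntegrand hgm) ?_
  filter_upwards [hg] with x hx
  exact H.abs_variationalIntegrand_le hB hr hx (hgr x)

end AdmissibleSlice

theorem lintegral_le_of_ae_tendsto {α : Type*} [MeasurableSpace α] {μ : Measure α}
    {f : ℕ → α → ENNReal} {g : α → ENNReal} {b : ℕ → ENNReal} {B : ENNReal}
    (hf : ∀ n, AEMeasurable (f n) μ) (hfg : ∀ᵐ x ∂μ, Tendsto (fun n => f n x) atTop (𝓝 (g x)))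
    (hfb : ∀ n, ∫⁻ x, f n x ∂μ ≤ b n) (hb : Tendsto b atTop (𝓝 B)) : ∫⁻ x, g x ∂μ ≤ B := by
  calc ∫⁻ x, g x ∂μ = ∫⁻ x, liminf (fun n => f n x) atTop ∂μ :=
        lintegral_congr_ae (hfg.mono fun x hx => hx.liminf_eq.symm)
    _ ≤ liminf (fun n => ∫⁻ x, f n x ∂μ) atTop := lintegral_liminf_le' hf
    _ ≤ liminf b atTop := liminf_le_liminf (Eventually.of_forall hfb)
    _ = B := hb.liminf_eq

theorem lintegral_ofReal_le_affine {α : Type*} [MeasurableSpace α] {μ : Measure α}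
    {u v m : α → ℝ} {A C β : ℝ} (hA : 0 ≤ A) (hC : 0 ≤ C) (hβ : 0 ≤ β)
    (hm : Integrable m μ) (hm0 : ∀ x, 0 ≤ m x) (hm1 : ∫ x, m x ∂μ = 1)
    (huv : ∀ᵐ x ∂μ, u x ≤ A * v x + C * m x)
    (hv : ∫⁻ x, ENNReal.ofReal (v x) ∂μ ≤ ENNReal.ofReal β) :
    ∫⁻ x, ENNReal.ofReal (u x) ∂μ ≤ ENNReal.ofReal (A * β + C) := by
  calc ∫⁻ x, ENNReal.ofReal (u x) ∂μ
      ≤ ∫⁻ x, (ENNReal.ofReal A * ENNReal.ofReal (v x) + ENNReal.ofReal (C * m x)) ∂μ := by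
        refine lintegral_mono_ae (huv.mono fun x hx => ?_)
        rw [← ENNReal.ofReal_mul hA]
        exact (ENNReal.ofReal_le_ofReal hx).trans ENNReal.ofReal_add_le
    _ = ENNReal.ofReal A * ∫⁻ x, ENNReal.ofReal (v x) ∂μ + ENNReal.ofReal C := by
        rw [lintegral_add_right' _ (hm.const_mul C).aemeasurable.ennreal_ofReal,
          lintegral_const_mul' _ _ ENNReal.ofReal_ne_top,
          ← ofReal_integral_eq_lintegral_ofReal (hm.const_mul C)
            (ae_of_all _ fun x => mul_nonneg hC (hm0 x)), integral_const_mul, hm1, mul_one]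
    _ ≤ ENNReal.ofReal A * ENNReal.ofReal β + ENNReal.ofReal C := by gcongr
    _ = _ := by rw [← ENNReal.ofReal_mul hA, ← ENNReal.ofReal_add (by positivity) hC]

theorem lintegral_ofReal_le_of_integral_le {α : Type*} [MeasurableSpace α] {μ : Measure α}
    {v w e : α → ℝ} {F : ℝ} (hv : ∀ x, 0 ≤ v x) (hw : Integrable w μ) (he : Integrable e μ)
    (hvw : ∀ᵐ x ∂μ, v x ≤ w x + e x) (hF : ∫ x, w x ∂μ ≤ F) :
    ∫⁻ x, ENNReal.ofReal (v x) ∂μ ≤ ENNReal.ofReal (F + ∫ x, e x ∂μ) := by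
  calc ∫⁻ x, ENNReal.ofReal (v x) ∂μ ≤ ∫⁻ x, ENNReal.ofReal (w x + e x) ∂μ :=
        lintegral_mono_ae (hvw.mono fun x hx => ENNReal.ofReal_le_ofReal hx)
    _ = ENNReal.ofReal (∫ x, (w x + e x) ∂μ) :=
        (ofReal_integral_eq_lintegral_ofReal (hw.add he)
          (hvw.mono fun x hx => (hv x).trans hx)).symm
    _ ≤ _ := by
        rw [integral_add hw he]
        exact ENNReal.ofReal_le_ofReal (by linarith)

/-- The quadratic `κ / 2 * (‖x‖ ^ 2 - k ^ 2)`, cut off at `0` outside the ball of radius `k`. -/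
noncomputable def truncatedQuadratic {V : Type*} [NormedAddCommGroup V] (κ k : ℝ) (x : V) : ℝ :=
  κ / 2 * (min ‖x‖ k ^ 2 - k ^ 2)

section TruncatedQuadratic

variable {κ k : ℝ}

theorem exists_lipschitzWith_truncatedQuadratic {V : Type*} [NormedAddCommGroup V]
    (hκ : 0 ≤ κ) (hk : 0 ≤ k) :
    ∃ L : NNReal, LipschitzWith L (truncatedQuadratic κ k : V → ℝ) := by
  refine ⟨⟨κ * k, by positivity⟩, LipschitzWith.of_dist_le_mul fun x y => ?_⟩
  have h1 : |min ‖x‖ k - min ‖y‖ k| ≤ dist x y := by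
    have h := ((LipschitzWith.id.min_const k).comp (lipschitzWith_one_norm (E := V))).dist_le_mul x y
    simpa [Real.dist_eq] using h
  have hx : 0 ≤ min ‖x‖ k := le_min (norm_nonneg _) hk
  have hy : 0 ≤ min ‖y‖ k := le_min (norm_nonneg _) hk
  have hx' : min ‖x‖ k ≤ k := min_le_right _ _
  have hy' : min ‖y‖ k ≤ k := min_le_right _ _
  have h2 : truncatedQuadratic κ k x - truncatedQuadratic κ k y =
      (κ / 2 * (min ‖x‖ k + min ‖y‖ k)) * (min ‖x‖ k - min ‖y‖ k) := by
    unfold truncatedQuadratic; ring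
  rw [Real.dist_eq, h2, abs_mul, abs_of_nonneg (by positivity)]
  change _ ≤ κ * k * dist x y
  refine mul_le_mul ?_ h1 (abs_nonneg _) (by positivity)
  nlinarith

theorem truncatedQuadratic_eq_zero {V : Type*} [NormedAddCommGroup V] {x : V} (h : k ≤ ‖x‖) :
    truncatedQuadratic κ k x = 0 := by
  rw [truncatedQuadratic, min_eq_right h, sub_self, mul_zero]

theorem hasCompactSupport_truncatedQuadratic {V : Type*} [NormedAddCommGroup V] [ProperSpace V] :
    HasCompactSupport (truncatedQuadratic κ k : V → ℝ) := by
  refine HasCompactSupport.intro (isCompact_closedBall (0 : V) k) fun x hx => ?_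
  rw [mem_closedBall_zero_iff, not_le] at hx
  exact truncatedQuadratic_eq_zero hx.le

theorem ae_gradient_truncatedQuadratic_eq (hk : k ≠ 0) :
    ∀ᵐ x : EuclideanSpace ℝ (Fin l),
      gradient (truncatedQuadratic κ k) x = if ‖x‖ < k then κ • x else 0 := by
  have h0 : ∀ᵐ x : EuclideanSpace ℝ (Fin l), x ∉ Metric.sphere (0 : EuclideanSpace ℝ (Fin l)) k :=
    measure_eq_zero_iff_ae_notMem.1 (Measure.addHaar_sphere_of_ne_zero _ _ hk)
  filter_upwards [h0] with x hx
  rw [mem_sphere_zero_iff_norm] at hx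
  split_ifs with h
  · have h1 : HasGradientAt (fun y : EuclideanSpace ℝ (Fin l) => κ / 2 * (‖y‖ ^ 2 - k ^ 2))
        (κ • x) x := by
      rw [hasGradientAt_iff_hasFDerivAt]
      refine (((hasStrictFDerivAt_norm_sq x).hasFDerivAt.sub_const (k ^ 2)).const_mul
        (κ / 2)).congr_fderiv ?_
      ext y
      simp
      ring
    refine (h1.congr_of_eventuallyEq ?_).gradient
    filter_upwards [continuous_norm.continuousAt.eventually_lt continuousAt_const h] with y hy
    rw [truncatedQuadratic, min_eq_left hy.le]
  · have h2 : k < ‖x‖ := lt_of_le_of_ne (not_lt.1 h) (Ne.symm hx)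
    have h1 : truncatedQuadratic κ k =ᶠ[𝓝 x] fun _ => (0 : ℝ) := by
      filter_upwards [continuousAt_const.eventually_lt continuous_norm.continuousAt h2] with y hy
      exact truncatedQuadratic_eq_zero hy.le
    rw [h1.gradient.eq_of_nhds, gradient_fun_const]

end TruncatedQuadratic

namespace AdmissibleSlice

variable {θ M K : ℝ}
  {c : EuclideanSpace ℝ (Fin l) → (EuclideanSpace ℝ (Fin l) →L[ℝ] EuclideanSpace ℝ (Fin l))}
  {a : EuclideanSpace ℝ (Fin l) → EuclideanSpace ℝ (Fin l)}
  {m : EuclideanSpace ℝ (Fin l) → ℝ}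
  {Dm g : EuclideanSpace ℝ (Fin l) → EuclideanSpace ℝ (Fin l)}

theorem variationalIntegrand_congr {g' : EuclideanSpace ℝ (Fin l) → EuclideanSpace ℝ (Fin l)}
    (h : g =ᵐ[volume] g') :
    variationalIntegrand c a m Dm g =ᵐ[volume] variationalIntegrand c a m Dm g' := by
  filter_upwards [h] with x hx
  rw [variationalIntegrand, variationalIntegrand, hx]

theorem le_neg_inner_drift (H : AdmissibleSlice θ M K c a m Dm) {ε R : ℝ} (hε : 0 < ε)
    (hR : 0 ≤ R) {x : EuclideanSpace ℝ (Fin l)} (hst : R ≤ ‖x‖ → ⟪a x, x⟫ ≤ -ε * ‖x‖ ^ 2) :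
    ε * ‖x‖ ^ 2 - (ε * R ^ 2 + M * (1 + R) * R) ≤ -⟪a x, x⟫ := by
  have hM := H.M_pos
  rcases le_total R ‖x‖ with h | h
  · have := hst h
    have : 0 ≤ ε * R ^ 2 + M * (1 + R) * R := by positivity
    linarith
  · have h1 : ⟪a x, x⟫ ≤ M * (1 + R) * R := by
      refine (real_inner_le_norm _ _).trans (mul_le_mul ?_ h (norm_nonneg _) (by positivity))
      exact (H.norm_drift_le x).trans (by gcongr)
    have h2 : ‖x‖ ^ 2 ≤ R ^ 2 := by gcongr
    nlinarith

theorem le_variationalIntegrand_of_dissipative (H : AdmissibleSlice θ M K c a m Dm) {ε B : ℝ}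
    (hε : 0 < ε) {x : EuclideanSpace ℝ (Fin l)} (hB : ε * ‖x‖ ^ 2 - B ≤ -⟪a x, x⟫)
    (hDm : m x = 0 → Dm x = 0) (hg : g x = (ε * θ) • x) :
    ε * θ * (ε / 4) * (‖x‖ ^ 2 * m x) ≤ variationalIntegrand c a m Dm g x +
      (ε * θ * (K ^ 2 / (2 * ε) + B) * m x +
        ε * θ * (θ⁻¹ ^ 2 / (2 * ε)) * (‖Dm x‖ ^ 2 / m x)) := by
  have hθ := H.θ_pos
  rcases (H.nonneg x).eq_or_lt with h0 | hm
  · simp [variationalIntegrand, hDm h0.symm, ← h0]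
  have h1 : -(‖x‖ * K) ≤ ⟪x, matDiv c x⟫ := by
    have := (abs_le.1 ((abs_real_inner_le_norm x (matDiv c x)).trans
      (mul_le_mul_of_nonneg_left (H.norm_matDiv_le x) (norm_nonneg x)))).1
    exact this
  have h2 : -(θ⁻¹ * (‖Dm x‖ * ‖x‖)) ≤ ⟪x, c x (Dm x)⟫ := by
    rw [real_inner_comm]
    exact (abs_le.1 (H.abs_inner_apply_le x (Dm x) x)).1
  have h3 := H.ell_upper x x
  have h4 : variationalIntegrand c a m Dm g x =
      ε * θ * ((1 / 2) * (m x * ⟪x, matDiv c x⟫ + ⟪x, c x (Dm x)⟫) + m x * -⟪a x, x⟫ -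
        (1 / 2) * (ε * (θ * ⟪c x x, x⟫)) * m x) := by
    rw [variationalIntegrand, hg, real_inner_comm x (a x)]
    simp only [map_smul, inner_sub_right, inner_add_right, real_inner_smul_left,
      real_inner_smul_right]
    ring
  have h5 : θ * ⟪c x x, x⟫ ≤ ‖x‖ ^ 2 := by
    calc θ * ⟪c x x, x⟫ ≤ θ * (θ⁻¹ * ‖x‖ ^ 2) := by gcongr
      _ = ‖x‖ ^ 2 := by field_simp
  rw [h4]
  obtain ⟨d, hd⟩ : ∃ d, ‖Dm x‖ = d * m x := ⟨‖Dm x‖ / m x, by field_simp⟩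
  have h6 : ‖Dm x‖ ^ 2 / m x = d ^ 2 * m x := by rw [hd]; field_simp
  rw [hd] at h2
  rw [h6]
  have key : ε / 4 * (‖x‖ ^ 2 * m x) ≤
      ((1 / 2) * (m x * -(‖x‖ * K) + -(θ⁻¹ * (d * m x * ‖x‖))) + m x * (ε * ‖x‖ ^ 2 - B) -
        (1 / 2) * (ε * ‖x‖ ^ 2) * m x) + ((K ^ 2 / (2 * ε) + B) * m x +
        θ⁻¹ ^ 2 / (2 * ε) * (d ^ 2 * m x)) := by
    have e1 : 0 ≤ m x / (8 * ε) * (ε * ‖x‖ - 2 * K) ^ 2 := by positivity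
    have e2 : 0 ≤ m x / (8 * ε) * (ε * ‖x‖ - 2 * (θ⁻¹ * d)) ^ 2 := by positivity
    have e3 : m x / (8 * ε) * (ε * ‖x‖ - 2 * K) ^ 2 =
        ε / 8 * (‖x‖ ^ 2 * m x) - 1 / 2 * (m x * (‖x‖ * K)) + K ^ 2 / (2 * ε) * m x := by
      field_simp; ring
    have e4 : m x / (8 * ε) * (ε * ‖x‖ - 2 * (θ⁻¹ * d)) ^ 2 =
        ε / 8 * (‖x‖ ^ 2 * m x) - 1 / 2 * (θ⁻¹ * (d * m x * ‖x‖)) +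
          θ⁻¹ ^ 2 / (2 * ε) * (d ^ 2 * m x) := by
      field_simp; ring
    rw [e3] at e1
    rw [e4] at e2
    linarith
  have key2 : ((1 / 2) * (m x * -(‖x‖ * K) + -(θ⁻¹ * (d * m x * ‖x‖))) +
      m x * (ε * ‖x‖ ^ 2 - B) - (1 / 2) * (ε * ‖x‖ ^ 2) * m x) ≤
      (1 / 2) * (m x * ⟪x, matDiv c x⟫ + ⟪x, c x (Dm x)⟫) + m x * -⟪a x, x⟫ -
        (1 / 2) * (ε * (θ * ⟪c x x, x⟫)) * m x := by
    gcongr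
  have hκ : 0 < ε * θ := by positivity
  have := mul_le_mul_of_nonneg_left (key.trans (add_le_add_left key2 _)) hκ.le
  linarith

theorem lintegral_norm_drift_sq_le_of_dissipative (H : AdmissibleSlice θ M K c a m Dm)
    {F ε R : ℝ} (hF : ∀ h : EuclideanSpace ℝ (Fin l) → ℝ, (∃ L : NNReal, LipschitzWith L h) →
      HasCompactSupport h → ∫ x, variationalIntegrand c a m Dm (gradient h) x ≤ F)
    (hF0 : 0 ≤ F) (hε : 0 < ε) (hR : 0 ≤ R)
    (hst : ∀ x, R ≤ ‖x‖ → ⟪a x, x⟫ ≤ -ε * ‖x‖ ^ 2) :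
    ∫⁻ x, ENNReal.ofReal (‖a x‖ ^ 2 * m x) ≤ ENNReal.ofReal
      (2 * M ^ 2 / (ε * θ * (ε / 4)) * (F +
        (ε * θ * (K ^ 2 / (2 * ε) + (ε * R ^ 2 + M * (1 + R) * R)) +
          ε * θ * (θ⁻¹ ^ 2 / (2 * ε)) * ∫ x, ‖Dm x‖ ^ 2 / m x)) + 2 * M ^ 2) := by
  have hθ := H.θ_pos
  have hM := H.M_pos
  have hm := H.nonneg
  set B : ℝ := ε * R ^ 2 + M * (1 + R) * R with hB
  have hB0 : 0 ≤ B := by positivity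
  set e : EuclideanSpace ℝ (Fin l) → ℝ := fun x => ε * θ * (K ^ 2 / (2 * ε) + B) * m x +
        ε * θ * (θ⁻¹ ^ 2 / (2 * ε)) * (‖Dm x‖ ^ 2 / m x) with he
  have hei : Integrable e :=
    (H.integrable.const_mul (ε * θ * (K ^ 2 / (2 * ε) + B))).add
      (H.integrable_fisher.const_mul (ε * θ * (θ⁻¹ ^ 2 / (2 * ε))))
  have heint : ∫ x, e x = ε * θ * (K ^ 2 / (2 * ε) + B) +
      ε * θ * (θ⁻¹ ^ 2 / (2 * ε)) * ∫ x, ‖Dm x‖ ^ 2 / m x := by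
    rw [he, integral_add (H.integrable.const_mul _) (H.integrable_fisher.const_mul _),
      integral_const_mul, integral_const_mul, H.integral_eq_one, mul_one]
  have he0 : ∀ x, 0 ≤ e x := fun x => by
    have := hm x
    positivity
  have hmm : AEMeasurable m := H.integrable.aemeasurable
  set v : EuclideanSpace ℝ (Fin l) → ℝ := fun x => ε * θ * (ε / 4) * (‖x‖ ^ 2 * m x) with hv
  have hv0 : ∀ x, 0 ≤ v x := fun x => by
    have := hm x
    positivity
  have hvm : AEMeasurable v :=
    ((measurable_norm.pow_const 2).aemeasurable.mul hmm).const_mul _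
  have hball : ∀ n : ℕ, MeasurableSet (Metric.ball (0 : EuclideanSpace ℝ (Fin l)) (n + 1)) :=
    fun n => measurableSet_ball
  have hlim : ∫⁻ x, ENNReal.ofReal (v x) ≤ ENNReal.ofReal (F + ∫ x, e x) := by
    refine lintegral_le_of_ae_tendsto (f := fun (n : ℕ) x => ENNReal.ofReal
      ((Metric.ball (0 : EuclideanSpace ℝ (Fin l)) (n + 1)).indicator v x))
      (fun n => (hvm.indicator (hball n)).ennreal_ofReal)
      (ae_of_all _ fun x => ?_) (fun n => ?_) (tendsto_const_nhds)
    · refine tendsto_const_nhds.congr' ?_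
      obtain ⟨N, hN⟩ := exists_nat_gt ‖x‖
      filter_upwards [eventually_ge_atTop N] with n hn
      have : (N : ℝ) ≤ n := by exact_mod_cast hn
      rw [indicator_of_mem (by rw [mem_ball_zero_iff]; linarith)]
    · have hn : (0 : ℝ) < (n : ℝ) + 1 := by positivity
      set g : EuclideanSpace ℝ (Fin l) → EuclideanSpace ℝ (Fin l) :=
        fun x => if ‖x‖ < (n : ℝ) + 1 then (ε * θ) • x else 0 with hg
      have hgrad : gradient (truncatedQuadratic (ε * θ) ((n : ℝ) + 1)) =ᵐ[volume] g :=
        ae_gradient_truncatedQuadratic_eq hn.ne'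
      have hgm : Measurable g :=
        Measurable.ite (measurableSet_lt measurable_norm measurable_const)
          (measurable_id.const_smul (ε * θ)) measurable_const
      have hgi : Integrable (variationalIntegrand c a m Dm g) := by
        refine H.integrable_variationalIntegrand (B := ε * θ * (n + 1)) (r := n + 1)
          (by positivity) hn.le hgm.aestronglyMeasurable (ae_of_all _ fun x => ?_) fun x hx => ?_
        · simp only [hg]
          split_ifs with h
          · rw [norm_smul, Real.norm_of_nonneg (by positivity)]
            gcongr
          · rw [norm_zero]; positivity
        · simp only [hg, if_neg (not_lt.2 hx.le)]
      refine lintegral_ofReal_le_of_integral_le (w := variationalIntegrand c a m Dm g)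
        (fun x => indicator_nonneg (fun y _ => hv0 y) x) hgi hei ?_ ?_
      · filter_upwards [H.grad_eq_zero] with x hx
        by_cases h : ‖x‖ < (n : ℝ) + 1
        · rw [indicator_of_mem (by rwa [mem_ball_zero_iff])]
          refine H.le_variationalIntegrand_of_dissipative hε
            (H.le_neg_inner_drift hε hR (hst x)) hx ?_
          simp only [hg, if_pos h]
        · rw [indicator_of_notMem (by rwa [mem_ball_zero_iff])]
          have : g x = 0 := by simp only [hg, if_neg h]
          simpa [variationalIntegrand, this] using he0 x
      · rw [← integral_congr_ae (variationalIntegrand_congr hgrad)]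
        exact hF _ (exists_lipschitzWith_truncatedQuadratic (by positivity) hn.le)
          hasCompactSupport_truncatedQuadratic
  rw [heint] at hlim
  have hI : 0 ≤ ∫ x, ‖Dm x‖ ^ 2 / m x :=
    integral_nonneg fun x => div_nonneg (sq_nonneg _) (hm x)
  refine lintegral_ofReal_le_affine (m := m) (by positivity) (by positivity) (by positivity)
    H.integrable hm H.integral_eq_one (ae_of_all _ fun x => ?_) hlim
  have h1 : ‖a x‖ ^ 2 ≤ 2 * M ^ 2 * (‖x‖ ^ 2 + 1) := by
    have : ‖a x‖ ^ 2 ≤ (M * (1 + ‖x‖)) ^ 2 := by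
      gcongr
      exact H.norm_drift_le x
    nlinarith [mul_nonneg (sq_nonneg M) (sq_nonneg (‖x‖ - 1))]
  calc ‖a x‖ ^ 2 * m x ≤ 2 * M ^ 2 * (‖x‖ ^ 2 + 1) * m x :=
        mul_le_mul_of_nonneg_right h1 (hm x)
    _ = _ := by rw [hv]; field_simp

end AdmissibleSlice

theorem gradient_eq_zero_of_notMem_tsupport {f : EuclideanSpace ℝ (Fin l) → ℝ}
    {x : EuclideanSpace ℝ (Fin l)} (hx : x ∉ tsupport f) : gradient f x = 0 := by
  have h : f =ᶠ[𝓝 x] fun _ => (0 : ℝ) := notMem_tsupport_iff_eventuallyEq.1 hx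
  rw [h.gradient.eq_of_nhds, gradient_fun_const]

theorem norm_gradient {f : EuclideanSpace ℝ (Fin l) → ℝ} {x : EuclideanSpace ℝ (Fin l)} :
    ‖gradient f x‖ = ‖fderiv ℝ f x‖ :=
  LinearIsometryEquiv.norm_map _ _

theorem continuous_gradient {f : EuclideanSpace ℝ (Fin l) → ℝ} (hf : ContDiff ℝ 1 f) :
    Continuous (gradient f) :=
  (LinearIsometryEquiv.continuous _).comp (hf.continuous_fderiv one_ne_zero)

theorem hasGradientAt_neg_mul_comp {χ u : EuclideanSpace ℝ (Fin l) → ℝ} {T : ℝ → ℝ}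
    {p x : EuclideanSpace ℝ (Fin l)} (hχ : DifferentiableAt ℝ χ x)
    (hT : DifferentiableAt ℝ T (u x)) (hu : HasGradientAt u p x) :
    HasGradientAt (fun y => -(χ y * T (u y)))
      (-((χ x * deriv T (u x)) • p) - T (u x) • gradient χ x) x := by
  have h1 := hχ.hasGradientAt
  rw [hasGradientAt_iff_hasFDerivAt] at h1 hu ⊢
  refine ((h1.mul (hT.hasDerivAt.comp_hasFDerivAt x hu)).neg).congr_fderiv ?_
  ext y
  simp
  ring

theorem exists_cutoff_sequence (l : ℕ) : ∃ C : ℝ, 0 ≤ C ∧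
    ∃ χ : ℕ → EuclideanSpace ℝ (Fin l) → ℝ, ∀ n, ContDiff ℝ (⊤ : ℕ∞) (χ n) ∧
      HasCompactSupport (χ n) ∧ (∀ x, 0 ≤ χ n x) ∧ (∀ x, χ n x ≤ 1) ∧
      (∀ x, ‖x‖ < n + 1 → χ n x = 1) ∧ (∀ x, ‖x‖ < n + 1 → gradient (χ n) x = 0) ∧
      ∀ x, ‖gradient (χ n) x‖ * (1 + ‖x‖) ≤ C := by
  let ψ : ContDiffBump (0 : EuclideanSpace ℝ (Fin l)) := ⟨1, 2, one_pos, one_lt_two⟩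
  have hψ : ContDiff ℝ (⊤ : ℕ∞) ψ := ψ.contDiff
  obtain ⟨C, hC⟩ := (ψ.hasCompactSupport.fderiv (𝕜 := ℝ)).exists_bound_of_continuous
    (hψ.continuous_fderiv (by simp))
  have hC0 : 0 ≤ C := (norm_nonneg _).trans (hC 0)
  refine ⟨3 * C, by positivity, fun n x => ψ (((n : ℝ) + 1)⁻¹ • x), fun n => ?_⟩
  have hn : (0 : ℝ) < (n : ℝ) + 1 := by positivity
  have hn1 : (1 : ℝ) ≤ (n : ℝ) + 1 := by linarith [Nat.cast_nonneg (α := ℝ) n]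
  have hnorm : ∀ x : EuclideanSpace ℝ (Fin l),
      ‖((n : ℝ) + 1)⁻¹ • x‖ = ‖x‖ / ((n : ℝ) + 1) := fun x => by
    rw [norm_smul, Real.norm_of_nonneg (by positivity), div_eq_inv_mul]
  have hone : ∀ x : EuclideanSpace ℝ (Fin l), ‖x‖ < n + 1 → ψ (((n : ℝ) + 1)⁻¹ • x) = 1 := by
    intro x hx
    refine ψ.one_of_mem_closedBall ?_
    rw [mem_closedBall_zero_iff, hnorm]
    exact (div_le_one hn).2 hx.le
  have hzero : ∀ x : EuclideanSpace ℝ (Fin l), 2 * ((n : ℝ) + 1) ≤ ‖x‖ →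
      ψ (((n : ℝ) + 1)⁻¹ • x) = 0 := by
    intro x hx
    refine ψ.zero_of_le_dist ?_
    rw [dist_zero_right, hnorm]
    exact (le_div_iff₀ hn).2 hx
  refine ⟨hψ.comp (contDiff_const_smul _), ?_, fun x => ψ.nonneg, fun x => ψ.le_one, hone, ?_, ?_⟩
  · exact HasCompactSupport.intro (isCompact_closedBall 0 (2 * ((n : ℝ) + 1))) fun x hx =>
      hzero x (by rw [mem_closedBall_zero_iff, not_le] at hx; exact hx.le)
  · intro x hx
    have h1 : (fun y : EuclideanSpace ℝ (Fin l) => ψ (((n : ℝ) + 1)⁻¹ • y)) =ᶠ[𝓝 x]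
        fun _ => (1 : ℝ) := by
      filter_upwards [continuous_norm.continuousAt.eventually_lt continuousAt_const hx] with y hy
      exact hone y hy
    rw [h1.gradient.eq_of_nhds, gradient_fun_const]
  · intro x
    by_cases hx : 2 * ((n : ℝ) + 1) < ‖x‖
    · have h1 : (fun y : EuclideanSpace ℝ (Fin l) => ψ (((n : ℝ) + 1)⁻¹ • y)) =ᶠ[𝓝 x]
          fun _ => (0 : ℝ) := by
        filter_upwards [continuousAt_const.eventually_lt continuous_norm.continuousAt hx] with y hy
        exact hzero y hy.le
      rw [h1.gradient.eq_of_nhds, gradient_fun_const, norm_zero, zero_mul]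
      positivity
    · have h1 : ‖gradient (fun y : EuclideanSpace ℝ (Fin l) => ψ (((n : ℝ) + 1)⁻¹ • y)) x‖ ≤
          ((n : ℝ) + 1)⁻¹ * C := by
        rw [norm_gradient, fderiv_comp_smul, norm_smul, Real.norm_of_nonneg (by positivity)]
        gcongr
        exact hC _
      calc _ ≤ ((n : ℝ) + 1)⁻¹ * C * (3 * ((n : ℝ) + 1)) :=
            mul_le_mul h1 (by linarith [not_lt.1 hx]) (by positivity) (by positivity)
        _ = 3 * C := by field_simp

namespace AdmissibleSlice

variable {θ M K : ℝ}
  {c : EuclideanSpace ℝ (Fin l) → (EuclideanSpace ℝ (Fin l) →L[ℝ] EuclideanSpace ℝ (Fin l))}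
  {a : EuclideanSpace ℝ (Fin l) → EuclideanSpace ℝ (Fin l)}
  {m : EuclideanSpace ℝ (Fin l) → ℝ}
  {Dm g : EuclideanSpace ℝ (Fin l) → EuclideanSpace ℝ (Fin l)}

theorem tendsto_variationalIntegrand {gs : ℕ → EuclideanSpace ℝ (Fin l) → EuclideanSpace ℝ (Fin l)}
    {x : EuclideanSpace ℝ (Fin l)} (h : Tendsto (fun n => gs n x) atTop (𝓝 (g x))) :
    Tendsto (fun n => variationalIntegrand c a m Dm (gs n) x) atTop
      (𝓝 (variationalIntegrand c a m Dm g x)) := by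
  have h1 : Tendsto (fun n => c x (gs n x)) atTop (𝓝 (c x (g x))) :=
    ((c x).continuous.tendsto _).comp h
  exact (h.inner tendsto_const_nhds).sub (((h1.inner h).const_mul _).mul_const _)

theorem integrable_and_integral_variationalIntegrand_le (H : AdmissibleSlice θ M K c a m Dm)
    {F : ℝ} (hF : ∀ h : EuclideanSpace ℝ (Fin l) → ℝ, (∃ L : NNReal, LipschitzWith L h) →
      HasCompactSupport h → ∫ x, variationalIntegrand c a m Dm (gradient h) x ≤ F)
    {f : EuclideanSpace ℝ (Fin l) → ℝ} {b : EuclideanSpace ℝ (Fin l) → EuclideanSpace ℝ (Fin l)}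
    (hfb : HasWeakGrad f b) {K' : ℝ} (hK' : 0 ≤ K') (hb : ∀ᵐ x, ‖b x‖ ≤ K' * (1 + ‖x‖))
    {T : ℝ → ℝ} (hT : ContDiff ℝ (⊤ : ℕ∞) T) {A : ℝ} (hTA : ∀ r, |T r| ≤ A)
    (hT' : ∀ r, |deriv T r| ≤ 1) {χ : EuclideanSpace ℝ (Fin l) → ℝ}
    (hχ : ContDiff ℝ (⊤ : ℕ∞) χ) (hχc : HasCompactSupport χ) :
    Integrable (variationalIntegrand c a m Dm fun x =>
        -((χ x * deriv T (f x)) • b x) - T (f x) • gradient χ x) ∧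
      ∫ x, variationalIntegrand c a m Dm (fun x =>
        -((χ x * deriv T (f x)) • b x) - T (f x) • gradient χ x) x ≤ F := by
  obtain ⟨r₀, hr₀⟩ := hχc.isCompact.isBounded.subset_closedBall (0 : EuclideanSpace ℝ (Fin l))
  set r := max r₀ 0 with hr
  have hr0 : 0 ≤ r := le_max_right _ _
  have hsupp : ∀ x, r < ‖x‖ → x ∉ tsupport χ := fun x hx hx' => by
    have h1 := hr₀ hx'
    rw [mem_closedBall_zero_iff] at h1
    exact absurd (h1.trans (le_max_left _ _)) (not_le.2 hx)
  have hχ1 : ContDiff ℝ 1 χ := hχ.of_le (by exact_mod_cast le_top)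
  have hT1 : ContDiff ℝ 1 T := hT.of_le (by exact_mod_cast le_top)
  have hTd : Continuous (deriv T) := hT1.continuous_deriv_one
  obtain ⟨C₁, hC₁⟩ := hχc.exists_bound_of_continuous hχ.continuous
  obtain ⟨C₂, hC₂⟩ := (hχc.fderiv (𝕜 := ℝ)).exists_bound_of_continuous
    (hχ1.continuous_fderiv one_ne_zero)
  have hC₁0 : 0 ≤ C₁ := (norm_nonneg _).trans (hC₁ 0)
  have hC₂0 : 0 ≤ C₂ := (norm_nonneg _).trans (hC₂ 0)
  have hA0 : 0 ≤ A := (abs_nonneg _).trans (hTA 0)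
  set B : ℝ := C₁ * 1 * (K' * (2 + r)) + A * C₂ with hBdef
  have hB : 0 ≤ B := by positivity
  have hbound : ∀ (x p : EuclideanSpace ℝ (Fin l)) (y : ℝ), (‖x‖ ≤ r → ‖p‖ ≤ K' * (2 + r)) →
      ‖-((χ x * deriv T y) • p) - T y • gradient χ x‖ ≤ B ∧
        (r < ‖x‖ → -((χ x * deriv T y) • p) - T y • gradient χ x = 0) := by
    intro x p y hp
    have hz : r < ‖x‖ → -((χ x * deriv T y) • p) - T y • gradient χ x = 0 := fun hx => by
      simp [image_eq_zero_of_notMem_tsupport (hsupp x hx),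
        gradient_eq_zero_of_notMem_tsupport (hsupp x hx)]
    refine ⟨?_, hz⟩
    by_cases hx : r < ‖x‖
    · rw [hz hx, norm_zero]; exact hB
    · refine (norm_sub_le _ _).trans ?_
      rw [norm_neg, norm_smul, norm_smul, norm_mul, norm_gradient]
      have h1 := hC₁ x
      have h2 := hC₂ x
      have h3 := hp (not_lt.1 hx)
      have h4 : ‖T y‖ ≤ A := hTA y
      have h5 : ‖deriv T y‖ ≤ 1 := hT' y
      rw [hBdef]
      gcongr
  set g : EuclideanSpace ℝ (Fin l) → EuclideanSpace ℝ (Fin l) := fun x =>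
    -((χ x * deriv T (f x)) • b x) - T (f x) • gradient χ x with hg
  set gs : ℕ → EuclideanSpace ℝ (Fin l) → EuclideanSpace ℝ (Fin l) := fun n x =>
    -((χ x * deriv T (mollify (shrinkingBump l n) f x)) • mollify (shrinkingBump l n) b x) -
      T (mollify (shrinkingBump l n) f x) • gradient χ x with hgs
  have hfn : ∀ n, ContDiff ℝ (⊤ : ℕ∞) (mollify (shrinkingBump l n) f) := fun n =>
    contDiff_mollify hfb.1
  have hgrad : ∀ n, gradient (fun x => -(χ x * T (mollify (shrinkingBump l n) f x))) = gs n := by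
    intro n
    funext x
    exact (hasGradientAt_neg_mul_comp (hχ1.differentiable one_ne_zero x)
      (hT1.differentiable one_ne_zero _) (hfb.hasGradientAt_mollify x)).gradient
  have hgsm : ∀ n, AEStronglyMeasurable (gs n) := fun n => by
    have h1 : Continuous (mollify (shrinkingBump l n) f) := (hfn n).continuous
    have h2 : Continuous (mollify (shrinkingBump l n) b) :=
      (contDiff_mollify (φ := shrinkingBump l n) hfb.2.1).continuous
    have h3 := continuous_gradient hχ1
    have h4 := hχ.continuous
    have h5 := hT.continuous
    have : Continuous (gs n) := by
      rw [hgs]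
      fun_prop
    exact this.aestronglyMeasurable
  have hgm : AEStronglyMeasurable g := by
    have h1 := hfb.1.aestronglyMeasurable
    have h2 := hfb.2.1.aestronglyMeasurable
    exact (((hχ.continuous.aestronglyMeasurable.mul
      (hTd.comp_aestronglyMeasurable h1)).smul h2).neg).sub
      ((hT.continuous.comp_aestronglyMeasurable h1).smul
        (continuous_gradient hχ1).aestronglyMeasurable)
  have hgb : ∀ᵐ x, ‖g x‖ ≤ B ∧ (r < ‖x‖ → g x = 0) := by
    filter_upwards [hb] with x hx
    refine hbound x (b x) (f x) fun hxr => hx.trans ?_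
    gcongr
    linarith
  have hgsb : ∀ n x, ‖gs n x‖ ≤ B ∧ (r < ‖x‖ → gs n x = 0) := by
    intro n x
    refine hbound x _ _ fun hxr => norm_mollify_le_of_ae_le x ?_
    filter_upwards [hb] with y hy hyx
    refine hy.trans ?_
    have h1 : ‖y‖ ≤ dist y x + ‖x‖ := by
      rw [dist_eq_norm]
      simpa using norm_add_le (y - x) x
    have h2 := rOut_shrinkingBump_le_one (l := l) n
    exact mul_le_mul_of_nonneg_left (by linarith) hK'
  have hlim : Tendsto (fun n => ∫ x, variationalIntegrand c a m Dm (gs n) x) atTop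
      (𝓝 (∫ x, variationalIntegrand c a m Dm g x)) := by
    refine tendsto_integral_of_dominated_convergence
      (fun x => B * ((1 / 2) * θ⁻¹) * ‖Dm x‖ +
        (B * (K / 2 + M * (1 + r)) + (1 / 2) * θ⁻¹ * B ^ 2) * m x)
      (fun n => H.aestronglyMeasurable_variationalIntegrand (hgsm n))
      ((H.integrable_grad.norm.const_mul _).add (H.integrable.const_mul _))
      (fun n => ae_of_all _ fun x =>
        H.abs_variationalIntegrand_le hB hr0 (hgsb n x).1 (hgsb n x).2) ?_
    filter_upwards [ae_tendsto_mollify hfb.1, ae_tendsto_mollify hfb.2.1] with x h1 h2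
    refine tendsto_variationalIntegrand ?_
    exact ((((((hTd.tendsto _).comp h1).const_mul (χ x)).smul h2).neg).sub
      (((hT.continuous.tendsto _).comp h1).smul_const _))
  refine ⟨?_, le_of_tendsto' hlim fun n => ?_⟩
  · refine ((H.integrable_grad.norm.const_mul (B * ((1 / 2) * θ⁻¹))).add
      (H.integrable.const_mul (B * (K / 2 + M * (1 + r)) + (1 / 2) * θ⁻¹ * B ^ 2))).mono'
      (H.aestronglyMeasurable_variationalIntegrand hgm) ?_
    filter_upwards [hgb] with x hx
    exact H.abs_variationalIntegrand_le hB hr0 hx.1 hx.2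
  · rw [← hgrad n]
    have hcs : HasCompactSupport fun x => -(χ x * T (mollify (shrinkingBump l n) f x)) :=
      (hχc.mul_right (f' := fun x => T (mollify (shrinkingBump l n) f x))).neg
    have hcd : ContDiff ℝ 1 fun x => -(χ x * T (mollify (shrinkingBump l n) f x)) :=
      ((hχ.mul (hT.comp (hfn n))).neg).of_le (by exact_mod_cast le_top)
    exact hF _ (hcd.lipschitzWith_of_hasCompactSupport hcs one_ne_zero) hcs

theorem norm_le_of_apply_eq (H : AdmissibleSlice θ M K c a m Dm)
    {b : EuclideanSpace ℝ (Fin l) → EuclideanSpace ℝ (Fin l)} {x : EuclideanSpace ℝ (Fin l)}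
    (hx : c x (b x) = a x - ((1 : ℝ) / 2) • matDiv c x) :
    ‖b x‖ ≤ θ⁻¹ * (M + K / 2) * (1 + ‖x‖) := by
  have hθ := H.θ_pos
  have hK := H.K_nonneg
  have h1 : θ * ‖b x‖ ≤ ‖c x (b x)‖ := by
    rcases (norm_nonneg (b x)).eq_or_lt with h0 | hpos
    · rw [← h0, mul_zero]; exact norm_nonneg _
    · have := (H.ell_lower x (b x)).trans (real_inner_le_norm _ _)
      refine le_of_mul_le_mul_right ?_ hpos
      linarith
  have h2 : ‖c x (b x)‖ ≤ M * (1 + ‖x‖) + 1 / 2 * K := by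
    rw [hx]
    refine (norm_sub_le _ _).trans (add_le_add (H.norm_drift_le x) ?_)
    rw [norm_smul, Real.norm_of_nonneg (by norm_num : (0 : ℝ) ≤ 1 / 2)]
    gcongr
    exact H.norm_matDiv_le x
  rw [mul_assoc, ← div_eq_inv_mul, le_div_iff₀ hθ]
  nlinarith [norm_nonneg x, mul_nonneg hK (norm_nonneg x)]

theorem norm_drift_sq_le_of_apply_eq (H : AdmissibleSlice θ M K c a m Dm)
    {b : EuclideanSpace ℝ (Fin l) → EuclideanSpace ℝ (Fin l)} {x : EuclideanSpace ℝ (Fin l)}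
    (hx : c x (b x) = a x - ((1 : ℝ) / 2) • matDiv c x) :
    ‖a x‖ ^ 2 ≤ 2 * θ⁻¹ ^ 2 * ‖b x‖ ^ 2 + K ^ 2 / 2 := by
  have hK := H.K_nonneg
  have h1 : a x = c x (b x) + ((1 : ℝ) / 2) • matDiv c x := by rw [hx]; abel
  have h2 : ‖a x‖ ≤ θ⁻¹ * ‖b x‖ + 1 / 2 * K := by
    rw [h1]
    refine (norm_add_le _ _).trans (add_le_add (H.norm_apply_le _ _) ?_)
    rw [norm_smul, Real.norm_of_nonneg (by norm_num : (0 : ℝ) ≤ 1 / 2)]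
    gcongr
    exact H.norm_matDiv_le x
  have h3 : ‖a x‖ ^ 2 ≤ (θ⁻¹ * ‖b x‖ + 1 / 2 * K) ^ 2 := by gcongr
  nlinarith [sq_nonneg (θ⁻¹ * ‖b x‖ - 1 / 2 * K)]

theorem le_variationalIntegrand_of_apply_eq (H : AdmissibleSlice θ M K c a m Dm)
    {b : EuclideanSpace ℝ (Fin l) → EuclideanSpace ℝ (Fin l)} {x w : EuclideanSpace ℝ (Fin l)}
    (hx : c x (b x) = a x - ((1 : ℝ) / 2) • matDiv c x) (hDm : m x = 0 → Dm x = 0) {τ : ℝ}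
    (hτ0 : 0 ≤ τ) (hτ1 : τ ≤ 1) (hg : g x = -(τ • b x) - w) :
    θ / 4 * (τ * ‖b x‖ ^ 2 * m x) ≤ variationalIntegrand c a m Dm g x +
      (θ⁻¹ / 4 * (‖Dm x‖ ^ 2 / m x) + (θ⁻¹ / 2 * (‖w‖ * ‖Dm x‖) +
        θ⁻¹ * (‖b x‖ * ‖w‖) * m x + θ⁻¹ / 2 * ‖w‖ ^ 2 * m x)) := by
  have hθ := H.θ_pos
  rcases (H.nonneg x).eq_or_lt with h0 | hm
  · simp [variationalIntegrand, hDm h0.symm, ← h0]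
  have ha : a x = c x (b x) + ((1 : ℝ) / 2) • matDiv c x := by rw [hx]; abel
  have h1 : variationalIntegrand c a m Dm g x =
      m x * ⟪c x (b x), b x⟫ * (τ - τ ^ 2 / 2) - τ / 2 * ⟪c x (b x), Dm x⟫ -
        1 / 2 * ⟪c x (Dm x), w⟫ + (1 - τ) * m x * ⟪c x (b x), w⟫ -
        1 / 2 * ⟪c x w, w⟫ * m x := by
    have s1 : ⟪b x, c x (Dm x)⟫ = ⟪c x (b x), Dm x⟫ := (H.symm x _ _).symm
    have s2 : ⟪c x w, b x⟫ = ⟪c x (b x), w⟫ := by rw [H.symm, real_inner_comm]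
    have s3 : ⟪w, c x (Dm x)⟫ = ⟪c x (Dm x), w⟫ := real_inner_comm _ _
    have s4 : ⟪w, c x (b x)⟫ = ⟪c x (b x), w⟫ := real_inner_comm _ _
    have s5 : ⟪b x, c x (b x)⟫ = ⟪c x (b x), b x⟫ := real_inner_comm _ _
    rw [variationalIntegrand, hg, ha]
    simp only [map_sub, map_neg, map_smul, inner_sub_right, inner_sub_left, inner_neg_left,
      inner_neg_right, inner_add_right, real_inner_smul_left, real_inner_smul_right, s1, s2, s3,
      s4, s5]
    ring
  have h2 := H.inner_nonneg x (m x • b x - Dm x)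
  have s6 : ⟪c x (Dm x), b x⟫ = ⟪c x (b x), Dm x⟫ := by rw [H.symm, real_inner_comm]
  simp only [map_sub, map_smul, inner_sub_right, inner_sub_left, real_inner_smul_left,
    real_inner_smul_right, s6] at h2
  have h3 : ⟪c x (b x), Dm x⟫ ≤
      1 / 2 * (m x * ⟪c x (b x), b x⟫) + 1 / 2 * (θ⁻¹ * (‖Dm x‖ ^ 2 / m x)) := by
    have h4 := H.ell_upper x (Dm x)
    have h5 : m x * (θ⁻¹ * (‖Dm x‖ ^ 2 / m x)) = θ⁻¹ * ‖Dm x‖ ^ 2 := by field_simp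
    refine le_of_mul_le_mul_left ?_ hm
    nlinarith
  have h4 := H.ell_lower x (b x)
  have h5 := (abs_le.1 (H.abs_inner_apply_le x (Dm x) w)).2
  have h6 := (abs_le.1 (H.abs_inner_apply_le x (b x) w)).1
  have h7 := H.ell_upper x w
  have hfish : 0 ≤ ‖Dm x‖ ^ 2 / m x := by positivity
  have e1 : (1 - τ) * m x * ⟪c x (b x), w⟫ ≥ -(θ⁻¹ * (‖b x‖ * ‖w‖) * m x) := by
    have i1 : (1 - τ) * m x * -(θ⁻¹ * (‖b x‖ * ‖w‖)) ≤ (1 - τ) * m x * ⟪c x (b x), w⟫ :=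
      mul_le_mul_of_nonneg_left h6 (mul_nonneg (by linarith) hm.le)
    have i2 : 0 ≤ τ * (θ⁻¹ * (‖b x‖ * ‖w‖) * m x) := by positivity
    nlinarith
  have e2 : 1 / 2 * ⟪c x w, w⟫ * m x ≤ θ⁻¹ / 2 * ‖w‖ ^ 2 * m x := by
    refine mul_le_mul_of_nonneg_right ?_ hm.le
    linarith
  have e3 : τ / 2 * ⟪c x (b x), Dm x⟫ ≤ τ / 4 * (m x * ⟪c x (b x), b x⟫) +
      θ⁻¹ / 4 * (‖Dm x‖ ^ 2 / m x) := by
    have i1 := mul_le_mul_of_nonneg_left h3 (by linarith : 0 ≤ τ / 2)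
    have i2 : 0 ≤ (1 - τ) * (θ⁻¹ / 4 * (‖Dm x‖ ^ 2 / m x)) :=
      mul_nonneg (by linarith) (by positivity)
    nlinarith
  have e4 : θ / 4 * (τ * ‖b x‖ ^ 2 * m x) ≤
      m x * ⟪c x (b x), b x⟫ * (τ - τ ^ 2 / 2) - τ / 4 * (m x * ⟪c x (b x), b x⟫) := by
    have i0 : 0 ≤ m x * ⟪c x (b x), b x⟫ := mul_nonneg hm.le (H.inner_nonneg _ _)
    have i1 : 0 ≤ m x * ⟪c x (b x), b x⟫ * (τ * (1 - τ)) :=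
      mul_nonneg i0 (mul_nonneg hτ0 (by linarith))
    have i2 := mul_le_mul_of_nonneg_left h4 (by positivity : 0 ≤ τ / 4 * m x)
    nlinarith
  rw [h1]
  linarith

end AdmissibleSlice

theorem hasDerivAt_mul_arctan_div {k : ℝ} (hk : k ≠ 0) (r : ℝ) :
    HasDerivAt (fun y => k * Real.arctan (y / k)) (1 / (1 + (r / k) ^ 2)) r := by
  refine ((((hasDerivAt_id r).div_const k).arctan).const_mul k).congr_deriv ?_
  simp only [id]
  field_simp

namespace AdmissibleSlice

variable {θ M K : ℝ}
  {c : EuclideanSpace ℝ (Fin l) → (EuclideanSpace ℝ (Fin l) →L[ℝ] EuclideanSpace ℝ (Fin l))}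
  {a : EuclideanSpace ℝ (Fin l) → EuclideanSpace ℝ (Fin l)}
  {m : EuclideanSpace ℝ (Fin l) → ℝ}
  {Dm : EuclideanSpace ℝ (Fin l) → EuclideanSpace ℝ (Fin l)}

theorem lintegral_deriv_comp_mul_norm_sq_le (H : AdmissibleSlice θ M K c a m Dm)
    {F : ℝ} (hF : ∀ h : EuclideanSpace ℝ (Fin l) → ℝ, (∃ L : NNReal, LipschitzWith L h) →
      HasCompactSupport h → ∫ x, variationalIntegrand c a m Dm (gradient h) x ≤ F)
    {f : EuclideanSpace ℝ (Fin l) → ℝ} {b : EuclideanSpace ℝ (Fin l) → EuclideanSpace ℝ (Fin l)}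
    (hfb : HasWeakGrad f b) (hb : ∀ᵐ x, c x (b x) = a x - ((1 : ℝ) / 2) • matDiv c x)
    {T : ℝ → ℝ} (hT : ContDiff ℝ (⊤ : ℕ∞) T) {A : ℝ} (hTA : ∀ r, |T r| ≤ A)
    (hT0 : ∀ r, 0 ≤ deriv T r) (hT1 : ∀ r, deriv T r ≤ 1) :
    ∫⁻ x, ENNReal.ofReal (θ / 4 * (deriv T (f x) * ‖b x‖ ^ 2 * m x)) ≤
      ENNReal.ofReal (F + θ⁻¹ / 4 * ∫ x, ‖Dm x‖ ^ 2 / m x) := by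
  obtain ⟨C, hC0, χ, hχ⟩ := exists_cutoff_sequence l
  have hθ := H.θ_pos
  have hθ' := inv_pos.2 hθ
  have hm := H.nonneg
  have hA0 : 0 ≤ A := (abs_nonneg _).trans (hTA 0)
  set K' : ℝ := θ⁻¹ * (M + K / 2)
  have hK' : 0 ≤ K' := mul_nonneg hθ'.le (by linarith [H.M_pos, H.K_nonneg])
  have hbK : ∀ᵐ x, ‖b x‖ ≤ K' * (1 + ‖x‖) := hb.mono fun x hx => H.norm_le_of_apply_eq hx
  have hfm := hfb.1.aestronglyMeasurable
  have hbm := hfb.2.1.aestronglyMeasurable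
  have hmm := H.integrable.aestronglyMeasurable
  have hDmm := H.measurable_grad.aestronglyMeasurable (μ := volume)
  have hTd : Continuous (deriv T) := (hT.of_le (by exact_mod_cast le_top)).continuous_deriv_one
  have hχ1 : ∀ n, ContDiff ℝ 1 (χ n) := fun n => (hχ n).1.of_le (by exact_mod_cast le_top)
  set v : EuclideanSpace ℝ (Fin l) → ℝ :=
    fun x => θ / 4 * (deriv T (f x) * ‖b x‖ ^ 2 * m x) with hv
  set vs : ℕ → EuclideanSpace ℝ (Fin l) → ℝ :=
    fun n x => θ / 4 * (χ n x * deriv T (f x) * ‖b x‖ ^ 2 * m x) with hvs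
  set q : ℕ → EuclideanSpace ℝ (Fin l) → ℝ := fun n x => ‖gradient (χ n) x‖ with hq
  set e : ℕ → EuclideanSpace ℝ (Fin l) → ℝ := fun n x =>
    θ⁻¹ / 2 * (A * q n x * ‖Dm x‖) + θ⁻¹ * (K' * (1 + ‖x‖) * (A * q n x)) * m x +
      θ⁻¹ / 2 * (A * q n x) ^ 2 * m x with he
  have hqc : ∀ n, Continuous (q n) := fun n => (continuous_gradient (hχ1 n)).norm
  have hem : ∀ n, AEStronglyMeasurable (e n) := fun n => by
    have h1 := (hqc n).aestronglyMeasurable (μ := volume)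
    have h2 : Continuous fun x => θ⁻¹ * (K' * (1 + ‖x‖) * (A * q n x)) := by
      have := hqc n
      fun_prop
    exact ((((h1.const_mul A).mul hDmm.norm).const_mul (θ⁻¹ / 2)).add
      (h2.aestronglyMeasurable.mul hmm)).add ((((h1.const_mul A).pow 2).const_mul _).mul hmm)
  set β : EuclideanSpace ℝ (Fin l) → ℝ := fun x => θ⁻¹ / 2 * (A * C) * ‖Dm x‖ +
    (θ⁻¹ * (K' * (A * C)) + θ⁻¹ / 2 * (A * C) ^ 2) * m x with hβ
  have hβi : Integrable β :=
    (H.integrable_grad.norm.const_mul (θ⁻¹ / 2 * (A * C))).add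
      (H.integrable.const_mul (θ⁻¹ * (K' * (A * C)) + θ⁻¹ / 2 * (A * C) ^ 2))
  have heβ : ∀ n x, ‖e n x‖ ≤ β x := by
    intro n x
    have hmx := hm x
    have hq0 : 0 ≤ q n x := norm_nonneg _
    have h1 : q n x * (1 + ‖x‖) ≤ C := (hχ n).2.2.2.2.2.2 x
    have h2 : q n x ≤ C := le_trans (by nlinarith [norm_nonneg x]) h1
    rw [Real.norm_of_nonneg (by positivity)]
    have h3 : K' * (1 + ‖x‖) * (A * q n x) ≤ K' * (A * C) := by
      calc K' * (1 + ‖x‖) * (A * q n x) = K' * (A * (q n x * (1 + ‖x‖))) := by ring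
        _ ≤ _ := by gcongr
    calc e n x ≤ θ⁻¹ / 2 * (A * C * ‖Dm x‖) + θ⁻¹ * (K' * (A * C)) * m x +
          θ⁻¹ / 2 * (A * C) ^ 2 * m x := by
          simp only [he]
          gcongr
      _ = β x := by rw [hβ]; ring
  have hei : ∀ n, Integrable (e n) := fun n => hβi.mono' (hem n) (ae_of_all _ (heβ n))
  have hevent : ∀ x : EuclideanSpace ℝ (Fin l), ∀ᶠ n : ℕ in atTop, ‖x‖ < (n : ℝ) + 1 := by
    intro x
    obtain ⟨N, hN⟩ := exists_nat_gt ‖x‖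
    filter_upwards [eventually_ge_atTop N] with n hn
    have : (N : ℝ) ≤ n := by exact_mod_cast hn
    linarith
  have helim : Tendsto (fun n => ∫ x, e n x) atTop (𝓝 0) := by
    have h := tendsto_integral_of_dominated_convergence (f := fun _ => (0 : ℝ)) β hem hβi
      (fun n => ae_of_all _ (heβ n)) (ae_of_all _ fun x => by
        refine tendsto_const_nhds.congr' ?_
        filter_upwards [hevent x] with n hn
        have : gradient (χ n) x = 0 := (hχ n).2.2.2.2.2.1 x hn
        simp [he, hq, this])
    simpa using h
  set I : ℝ := ∫ x, ‖Dm x‖ ^ 2 / m x with hI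
  have hblim : Tendsto (fun n => ENNReal.ofReal (F + (θ⁻¹ / 4 * I + ∫ x, e n x))) atTop
      (𝓝 (ENNReal.ofReal (F + θ⁻¹ / 4 * I))) := by
    have h := (helim.const_add (θ⁻¹ / 4 * I)).const_add F
    rw [add_zero] at h
    exact ENNReal.tendsto_ofReal h
  have hvm : ∀ n, AEMeasurable (vs n) := fun n =>
    ((((((hχ n).1.continuous.aestronglyMeasurable.mul
      (hTd.comp_aestronglyMeasurable hfm)).mul (hbm.norm.pow 2)).mul hmm)).const_mul
        (θ / 4)).aemeasurable
  refine lintegral_le_of_ae_tendsto (f := fun n x => ENNReal.ofReal (vs n x))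
    (fun n => (hvm n).ennreal_ofReal) (ae_of_all _ fun x => ?_) (fun n => ?_) hblim
  · refine tendsto_const_nhds.congr' ?_
    filter_upwards [hevent x] with n hn
    have : χ n x = 1 := (hχ n).2.2.2.2.1 x hn
    simp [hvs, this]
  · obtain ⟨hcd, hcs, hχ0, hχle, -, -, -⟩ := hχ n
    obtain ⟨hi, hintegral⟩ := H.integrable_and_integral_variationalIntegrand_le hF hfb hK' hbK hT hTA
      (fun r => by rw [abs_of_nonneg (hT0 r)]; exact hT1 r) hcd hcs
    have hsum : ∫ x, (θ⁻¹ / 4 * (‖Dm x‖ ^ 2 / m x) + e n x) = θ⁻¹ / 4 * I + ∫ x, e n x := by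
      rw [integral_add (H.integrable_fisher.const_mul _) (hei n), integral_const_mul]
    rw [← hsum]
    refine lintegral_ofReal_le_of_integral_le (fun x => ?_) hi
      ((H.integrable_fisher.const_mul (θ⁻¹ / 4)).add (hei n)) ?_ hintegral
    · have h1 := hm x
      have h2 := hχ0 x
      have h3 := hT0 (f x)
      simp only [hvs]
      positivity
    · filter_upwards [hb, hbK, H.grad_eq_zero] with x hx hbx hDx
      have hmx := hm x
      have h1 := H.le_variationalIntegrand_of_apply_eq (w := T (f x) • gradient (χ n) x)
        (g := fun x => -((χ n x * deriv T (f x)) • b x) - T (f x) • gradient (χ n) x)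
        hx hDx (mul_nonneg (hχ0 x) (hT0 _))
        (mul_le_one₀ (hχle x) (hT0 _) (hT1 _)) rfl
      have h2 : ‖T (f x) • gradient (χ n) x‖ ≤ A * q n x := by
        rw [norm_smul]
        exact mul_le_mul_of_nonneg_right (hTA _) (norm_nonneg _)
      refine h1.trans (add_le_add le_rfl (add_le_add le_rfl ?_))
      simp only [he]
      gcongr

theorem lintegral_norm_drift_sq_le_of_hasWeakGrad (H : AdmissibleSlice θ M K c a m Dm)
    {F : ℝ} (hF : ∀ h : EuclideanSpace ℝ (Fin l) → ℝ, (∃ L : NNReal, LipschitzWith L h) →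
      HasCompactSupport h → ∫ x, variationalIntegrand c a m Dm (gradient h) x ≤ F)
    (hF0 : 0 ≤ F) {f : EuclideanSpace ℝ (Fin l) → ℝ}
    {b : EuclideanSpace ℝ (Fin l) → EuclideanSpace ℝ (Fin l)}
    (hfb : HasWeakGrad f b) (hb : ∀ᵐ x, c x (b x) = a x - ((1 : ℝ) / 2) • matDiv c x) :
    ∫⁻ x, ENNReal.ofReal (‖a x‖ ^ 2 * m x) ≤ ENNReal.ofReal
      (8 * θ⁻¹ ^ 3 * (F + θ⁻¹ / 4 * ∫ x, ‖Dm x‖ ^ 2 / m x) + K ^ 2 / 2) := by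
  have hθ := H.θ_pos
  have hm := H.nonneg
  set T : ℕ → ℝ → ℝ := fun n r => ((n : ℝ) + 1) * Real.arctan (r / ((n : ℝ) + 1)) with hT
  have hderiv : ∀ n r, deriv (T n) r = 1 / (1 + (r / ((n : ℝ) + 1)) ^ 2) := fun n r =>
    (hasDerivAt_mul_arctan_div (by positivity) r).deriv
  have hlim : ∫⁻ x, ENNReal.ofReal (θ / 4 * (1 * ‖b x‖ ^ 2 * m x)) ≤
      ENNReal.ofReal (F + θ⁻¹ / 4 * ∫ x, ‖Dm x‖ ^ 2 / m x) := by
    have hTs : ∀ n, ContDiff ℝ (⊤ : ℕ∞) (T n) := fun n =>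
      contDiff_const.mul (Real.contDiff_arctan.comp (contDiff_id.div_const _))
    refine lintegral_le_of_ae_tendsto
      (f := fun n x => ENNReal.ofReal (θ / 4 * (deriv (T n) (f x) * ‖b x‖ ^ 2 * m x)))
      (fun n => ?_) (ae_of_all _ fun x => ?_) (fun n => ?_) tendsto_const_nhds
    · have hc : Continuous (deriv (T n)) :=
        ((hTs n).of_le (by exact_mod_cast le_top)).continuous_deriv_one
      exact ((((hc.comp_aestronglyMeasurable hfb.1.aestronglyMeasurable).mul
        (hfb.2.1.aestronglyMeasurable.norm.pow 2)).mul
        H.integrable.aestronglyMeasurable).const_mul (θ / 4)).aemeasurable.ennreal_ofReal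
    · have h0 : Tendsto (fun n : ℕ => f x / ((n : ℝ) + 1)) atTop (𝓝 0) :=
        tendsto_const_nhds.div_atTop
          (tendsto_natCast_atTop_atTop.atTop_add tendsto_const_nhds)
      have h1 : Tendsto (fun n => deriv (T n) (f x)) atTop (𝓝 1) := by
        simp only [hderiv]
        have h2 : Tendsto (fun n : ℕ => 1 + (f x / ((n : ℝ) + 1)) ^ 2) atTop (𝓝 1) := by
          simpa using (h0.pow 2).const_add 1
        simpa using h2.inv₀ one_ne_zero
      exact ENNReal.tendsto_ofReal (((h1.mul_const _).mul_const _).const_mul _)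
    · refine H.lintegral_deriv_comp_mul_norm_sq_le hF hfb hb (hTs n)
        (A := ((n : ℝ) + 1) * (Real.pi / 2)) (fun r => ?_) (fun r => ?_) fun r => ?_
      · rw [hT, abs_mul, abs_of_nonneg (by positivity : (0 : ℝ) ≤ (n : ℝ) + 1)]
        gcongr
        exact abs_le.2 ⟨(Real.neg_pi_div_two_lt_arctan _).le, (Real.arctan_lt_pi_div_two _).le⟩
      · rw [hderiv]; positivity
      · rw [hderiv, div_le_one (by positivity)]
        exact le_add_of_nonneg_right (sq_nonneg _)
  have hI : 0 ≤ ∫ x, ‖Dm x‖ ^ 2 / m x :=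
    integral_nonneg fun x => div_nonneg (sq_nonneg _) (hm x)
  refine lintegral_ofReal_le_affine (m := m) (by positivity) (by positivity) (by positivity)
    H.integrable hm H.integral_eq_one (hb.mono fun x hx => ?_) hlim
  calc ‖a x‖ ^ 2 * m x ≤ (2 * θ⁻¹ ^ 2 * ‖b x‖ ^ 2 + K ^ 2 / 2) * m x :=
        mul_le_mul_of_nonneg_right (H.norm_drift_sq_le_of_apply_eq hx) (hm x)
    _ = _ := by field_simp; ring

/-- The integral bound in terms of the variational functional itself, given a bound in terms of
an arbitrary finite majorant of it. -/
theorem lintegral_le_iSup_of_forall (H : AdmissibleSlice θ M K c a m Dm) {A B C : ℝ}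
    (hA : 0 < A) (hB : 0 ≤ B) {J : ENNReal}
    (hJ : ∀ F : ℝ, 0 ≤ F → (∀ h : EuclideanSpace ℝ (Fin l) → ℝ,
      (∃ L : NNReal, LipschitzWith L h) → HasCompactSupport h →
        ∫ x, variationalIntegrand c a m Dm (gradient h) x ≤ F) →
      J ≤ ENNReal.ofReal (A * F + B * (∫ x, ‖Dm x‖ ^ 2 / m x) + C)) :
    J ≤ ENNReal.ofReal A * (⨆ h : {h : EuclideanSpace ℝ (Fin l) → ℝ //
          (∃ K : NNReal, LipschitzWith K h) ∧ HasCompactSupport h},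
        ENNReal.ofReal (∫ x, variationalIntegrand c a m Dm (gradient h.1) x)) +
      (ENNReal.ofReal B * (∫⁻ x, ENNReal.ofReal (‖Dm x‖ ^ 2 / m x)) + ENNReal.ofReal C) := by
  set S := ⨆ h : {h : EuclideanSpace ℝ (Fin l) → ℝ //
          (∃ K : NNReal, LipschitzWith K h) ∧ HasCompactSupport h},
        ENNReal.ofReal (∫ x, variationalIntegrand c a m Dm (gradient h.1) x) with hS
  rcases eq_or_ne S ⊤ with htop | htop
  · rw [htop, ENNReal.mul_top (by simpa using hA), top_add]
    exact le_top
  · have h1 := hJ S.toReal ENNReal.toReal_nonneg fun h hL hc => by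
      refine (ENNReal.ofReal_le_iff_le_toReal htop).1 ?_
      exact le_iSup (fun h : {h : EuclideanSpace ℝ (Fin l) → ℝ //
          (∃ K : NNReal, LipschitzWith K h) ∧ HasCompactSupport h} =>
        ENNReal.ofReal (∫ x, variationalIntegrand c a m Dm (gradient h.1) x)) ⟨h, hL, hc⟩
    refine h1.trans ((ENNReal.ofReal_add_le).trans ?_)
    rw [← add_assoc]
    gcongr
    refine (ENNReal.ofReal_add_le).trans (le_of_eq ?_)
    rw [ENNReal.ofReal_mul hA.le, ENNReal.ofReal_mul hB, ENNReal.ofReal_toReal htop,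
      ofReal_integral_eq_lintegral_ofReal H.integrable_fisher
        (ae_of_all _ fun x => div_nonneg (sq_nonneg _) (H.nonneg x))]

end AdmissibleSlice

/-- A slice is admissible as soon as its density has finite Fisher information. -/
theorem AdmissibleSlice.of_hasWeakGrad {θ M Kc : ℝ}
    {c : EuclideanSpace ℝ (Fin l) → (EuclideanSpace ℝ (Fin l) →L[ℝ] EuclideanSpace ℝ (Fin l))}
    {a : EuclideanSpace ℝ (Fin l) → EuclideanSpace ℝ (Fin l)}
    {m : EuclideanSpace ℝ (Fin l) → ℝ}
    {Dm : EuclideanSpace ℝ (Fin l) → EuclideanSpace ℝ (Fin l)}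
    (hθ : 0 < θ) (hM : 0 < M) (hsymm : ∀ x y y', ⟪c x y, y'⟫ = ⟪y, c x y'⟫)
    (hell : ∀ x y, θ * ‖y‖ ^ 2 ≤ ⟪c x y, y⟫ ∧ ⟪c x y, y⟫ ≤ θ⁻¹ * ‖y‖ ^ 2)
    (hc : ContDiff ℝ 1 c) (hc' : ∀ x, ‖fderiv ℝ c x‖ ≤ Kc) (ha : Measurable a)
    (ha' : ∀ x, ‖a x‖ ≤ M * (1 + ‖x‖)) (hmm : Measurable m) (hDmm : Measurable Dm)
    (hm0 : ∀ x, 0 ≤ m x) (hm1 : ∫ x, m x = 1) (hmD : HasWeakGrad m Dm)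
    (hI : ∫⁻ x, ENNReal.ofReal (‖Dm x‖ ^ 2 / m x) < ⊤) :
    AdmissibleSlice θ M (l * Kc) c a m Dm where
  θ_pos := hθ
  M_pos := hM
  symm := hsymm
  ell_lower x y := (hell x y).1
  ell_upper x y := (hell x y).2
  contDiff := hc
  norm_matDiv_le x := _root_.norm_matDiv_le (hc' x)
  measurable_drift := ha
  norm_drift_le := ha'
  nonneg := hm0
  integrable := by
    by_contra h
    exact zero_ne_one ((integral_undef h).symm.trans hm1)
  integral_eq_one := hm1
  measurable_grad := hDmm
  grad_eq_zero := hmD.ae_eq_zero_of_eq_zero hm0 hmm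
  integrable_fisher := by
    refine ⟨((hDmm.norm.pow_const 2).div hmm).aestronglyMeasurable, ?_⟩
    rwa [hasFiniteIntegral_iff_ofReal
      (ae_of_all _ fun x => div_nonneg (sq_nonneg _) (hm0 x))]

/-- Lemma `le:gradient` of the paper: under either a strengthened stability condition or
a gradient-type condition on the drift, finiteness of the variational functional implies
square integrability of the drift against the density:
`∫₀ᵗ∫ |a_s(x)|² m_s(x) dx ds < ∞`. -/
theorem drift_square_integrable
    (l : ℕ) (t θ M L : ℝ)
    (ht : 0 < t) (hθ0 : 0 < θ) (hθ1 : θ ≤ 1) (hM : 0 < M) (hL : 0 < L)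
    (c : ℝ → EuclideanSpace ℝ (Fin l) →
        (EuclideanSpace ℝ (Fin l) →L[ℝ] EuclideanSpace ℝ (Fin l)))
    (a : ℝ → EuclideanSpace ℝ (Fin l) → EuclideanSpace ℝ (Fin l))
    (m : ℝ → EuclideanSpace ℝ (Fin l) → ℝ)
    (Dm : ℝ → EuclideanSpace ℝ (Fin l) → EuclideanSpace ℝ (Fin l))
    -- measurability
    (hc_meas : ∀ y, Measurable (fun p : ℝ × EuclideanSpace ℝ (Fin l) => (c p.1 p.2) y))
    (ha_meas : Measurable (fun p : ℝ × EuclideanSpace ℝ (Fin l) => a p.1 p.2))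
    (hm_meas : Measurable (fun p : ℝ × EuclideanSpace ℝ (Fin l) => m p.1 p.2))
    (hDm_meas : Measurable (fun p : ℝ × EuclideanSpace ℝ (Fin l) => Dm p.1 p.2))
    -- symmetry and uniform ellipticity of `c`
    (hc_symm : ∀ s ∈ Set.Icc (0 : ℝ) t, ∀ x y y', ⟪c s x y, y'⟫ = ⟪y, c s x y'⟫)
    (hc_ell : ∀ s ∈ Set.Icc (0 : ℝ) t, ∀ x y,
      θ * ‖y‖ ^ 2 ≤ ⟪c s x y, y⟫ ∧ ⟪c s x y, y⟫ ≤ θ⁻¹ * ‖y‖ ^ 2)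
    -- `c_s` of class `C¹` with first derivatives bounded uniformly over `s ∈ [0,t]`
    (hc_C1 : ∀ s ∈ Set.Icc (0 : ℝ) t, ContDiff ℝ 1 (c s))
    (hc_deriv_bd : ∃ Kc : ℝ, ∀ s ∈ Set.Icc (0 : ℝ) t, ∀ x, ‖fderiv ℝ (c s) x‖ ≤ Kc)
    -- linear growth of the drift
    (ha_growth : ∀ s ∈ Set.Icc (0 : ℝ) t, ∀ x, ‖a s x‖ ≤ M * (1 + ‖x‖))
    -- `m_s` a probability density of class `W^{1,1}_loc` for a.e. `s`
    (hm : ∀ᵐ s ∂(volume.restrict (Set.Icc (0 : ℝ) t)),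
      (∀ x, 0 ≤ m s x) ∧ (∫ x, m s x) = 1 ∧ HasWeakGrad (m s) (Dm s))
    -- global integrability of `|Dm|²/m`
    (hDm_int : (∫⁻ s in Set.Icc (0 : ℝ) t,
      ∫⁻ x, ENNReal.ofReal (‖Dm s x‖ ^ 2 / m s x)) < ⊤)
    -- the variational functional is bounded by `L`, the supremum being over compactly
    -- supported Lipschitz functions `h` with a.e. gradient `∇h`
    (hvar : (∫⁻ s in Set.Icc (0 : ℝ) t,
      ⨆ h : {h : EuclideanSpace ℝ (Fin l) → ℝ //
          (∃ K : NNReal, LipschitzWith K h) ∧ HasCompactSupport h},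
        ENNReal.ofReal (∫ x,
          (⟪gradient h.1 x,
              ((1 : ℝ) / 2) • (m s x • matDiv (c s) x + (c s x) (Dm s x)) -
                m s x • a s x⟫ -
            (1 / 2) * ⟪(c s x) (gradient h.1 x), gradient h.1 x⟫ * m s x))) ≤
      ENNReal.ofReal L)
    -- additionally, either the strengthened stability condition (i) ...
    (hcase : (∃ ε : ℝ, 0 < ε ∧ ∃ R : ℝ, ∀ x : EuclideanSpace ℝ (Fin l), R ≤ ‖x‖ →
        ∀ s ∈ Set.Icc (0 : ℝ) t, ⟪a s x, x⟫ ≤ -ε * ‖x‖ ^ 2) ∨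
      -- ... or the gradient condition (ii)
      (∀ᵐ s ∂(volume.restrict (Set.Icc (0 : ℝ) t)),
        ∃ (ahat : EuclideanSpace ℝ (Fin l) → ℝ)
          (gahat : EuclideanSpace ℝ (Fin l) → EuclideanSpace ℝ (Fin l)),
          HasWeakGrad ahat gahat ∧
          ∀ᵐ x ∂(volume : Measure (EuclideanSpace ℝ (Fin l))),
            (c s x) (gahat x) = a s x - ((1 : ℝ) / 2) • matDiv (c s) x)) :
    (∫⁻ s in Set.Icc (0 : ℝ) t,
      ∫⁻ x, ENNReal.ofReal (‖a s x‖ ^ 2 * m s x)) < ⊤ := by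
  obtain ⟨Kc, hKc⟩ := hc_deriv_bd
  have hIcc : ∀ᵐ s ∂(volume.restrict (Set.Icc (0 : ℝ) t)), s ∈ Set.Icc (0 : ℝ) t :=
    ae_restrict_mem measurableSet_Icc
  have hImeas : Measurable fun s => ∫⁻ x, ENNReal.ofReal (‖Dm s x‖ ^ 2 / m s x) :=
    Measurable.lintegral_prod_right' ((hDm_meas.norm.pow_const 2).div hm_meas).ennreal_ofReal
  have hslice : ∀ᵐ s ∂(volume.restrict (Set.Icc (0 : ℝ) t)),
      AdmissibleSlice θ M (l * Kc) (c s) (a s) (m s) (Dm s) := by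
    filter_upwards [hIcc, hm, ae_lt_top hImeas hDm_int.ne] with s hs ⟨hm0, hm1, hmD⟩ hI
    exact AdmissibleSlice.of_hasWeakGrad hθ0 hM (hc_symm s hs) (hc_ell s hs) (hc_C1 s hs)
      (hKc s hs) (ha_meas.comp measurable_prodMk_left) (ha_growth s hs)
      (hm_meas.comp measurable_prodMk_left) (hDm_meas.comp measurable_prodMk_left) hm0 hm1 hmD hI
  have key : ∃ A B C : ℝ, ∀ᵐ s ∂(volume.restrict (Set.Icc (0 : ℝ) t)),
      ∫⁻ x, ENNReal.ofReal (‖a s x‖ ^ 2 * m s x) ≤ ENNReal.ofReal A *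
        (⨆ h : {h : EuclideanSpace ℝ (Fin l) → ℝ //
          (∃ K : NNReal, LipschitzWith K h) ∧ HasCompactSupport h},
          ENNReal.ofReal (∫ x, variationalIntegrand (c s) (a s) (m s) (Dm s) (gradient h.1) x)) +
        (ENNReal.ofReal B * (∫⁻ x, ENNReal.ofReal (‖Dm s x‖ ^ 2 / m s x)) +
          ENNReal.ofReal C) := by
    rcases hcase with ⟨ε, hε, R, hst⟩ | hgrad
    · set A : ℝ := 2 * M ^ 2 / (ε * θ * (ε / 4)) with hA
      refine ⟨A, A * (ε * θ * (θ⁻¹ ^ 2 / (2 * ε))), A * (ε * θ * ((l * Kc) ^ 2 / (2 * ε) +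
        (ε * max R 0 ^ 2 + M * (1 + max R 0) * max R 0))) + 2 * M ^ 2, ?_⟩
      filter_upwards [hIcc, hslice] with s hs H
      refine H.lintegral_le_iSup_of_forall (by positivity) (by positivity) fun F hF0 hF => ?_
      refine (H.lintegral_norm_drift_sq_le_of_dissipative hF hF0 hε (le_max_right R 0)
        fun x hx => hst x ((le_max_left _ _).trans hx) s hs).trans (le_of_eq ?_)
      congr 1
      ring
    · refine ⟨8 * θ⁻¹ ^ 3, 8 * θ⁻¹ ^ 3 * (θ⁻¹ / 4), (l * Kc) ^ 2 / 2, ?_⟩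
      filter_upwards [hslice, hgrad] with s H ⟨ahat, gahat, hw, hgahat⟩
      refine H.lintegral_le_iSup_of_forall (by positivity) (by positivity) fun F hF0 hF => ?_
      refine (H.lintegral_norm_drift_sq_le_of_hasWeakGrad hF hF0 hw hgahat).trans (le_of_eq ?_)
      congr 1
      ring
  obtain ⟨A, B, C, hABC⟩ := key
  refine (lintegral_mono_ae hABC).trans_lt ?_
  rw [lintegral_add_right _ ((hImeas.const_mul _).add_const _),
    lintegral_const_mul' _ _ ENNReal.ofReal_ne_top,
    lintegral_add_right _ measurable_const, lintegral_const_mul' _ _ ENNReal.ofReal_ne_top,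
    lintegral_const, Measure.restrict_apply_univ]
  refine ENNReal.add_lt_top.2 ⟨ENNReal.mul_lt_top ENNReal.ofReal_lt_top
    (hvar.trans_lt ENNReal.ofReal_lt_top), ENNReal.add_lt_top.2
    ⟨ENNReal.mul_lt_top ENNReal.ofReal_lt_top hDm_int,
      ENNReal.mul_lt_top ENNReal.ofReal_lt_top measure_Icc_lt_top⟩⟩
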